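/- A finite primitive permutation group of almost simple type cannot have a point-stabiliser whose exponent divides 4. -/

import Mathlib

open MulAction

/-- A permutation action is primitive if it is transitive and all blocks are
trivial. -/
def IsPrimitiveAction (G Ω : Type*) [Group G] [MulAction G Ω] : Prop :=
  IsPretransitive G Ω ∧ ∀ B : Set Ω, IsBlock G B → IsTrivialBlock B

section NormRelation

variable {A : Type*} [Ring A] {G a₀ a₁ a₂ a₃ c₀ c₁ c₂ f₀ f₁ : A}

/-- If `1 + G + G² + G³ = 0` for a unit `G` which permutes commuting families of elements
cyclically, then certain products of differences vanish. -/
theorem sub_mul_sub_mul_sub_eq_zero (hG : IsUnit G) (hS : 1 + G + G ^ 2 + G ^ 3 = 0)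
    (ha₀ : G * a₀ = a₁ * G) (ha₁ : G * a₁ = a₂ * G) (ha₂ : G * a₂ = a₃ * G)
    (hc₀ : G * c₀ = c₁ * G) (hc₁ : G * c₁ = c₂ * G) (hf₀ : G * f₀ = f₁ * G)
    (h₁ : Commute a₀ c₀) (h₂ : Commute a₁ c₀) (h₃ : Commute a₂ c₀) (h₄ : Commute a₃ c₀)
    (h₅ : Commute a₀ f₀) (h₆ : Commute a₂ f₀) (h₇ : Commute a₃ f₀)
    (h₈ : Commute c₀ f₀) (h₉ : Commute c₁ f₀) (h₁₀ : Commute c₂ f₀) :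
    (a₃ - a₀) * (c₂ - c₀) * (f₁ - f₀) = 0 := by
  have e₁ : (a₁ - a₀) + (a₂ - a₀) * G + (a₃ - a₀) * G ^ 2 = 0 := by
    have hp₂ : G ^ 2 * a₀ = a₂ * G ^ 2 := by
      rw [pow_two, mul_assoc, ha₀, ← mul_assoc, ha₁, mul_assoc]
    have hp₃ : G ^ 3 * a₀ = a₃ * G ^ 3 := by
      rw [pow_succ' G 2, mul_assoc, hp₂, ← mul_assoc, ha₂, mul_assoc]
    refine hG.mul_left_injective (?_ : _ * G = 0 * G)
    have : (1 + G + G ^ 2 + G ^ 3) * a₀ - a₀ * (1 + G + G ^ 2 + G ^ 3) = 0 := by simp [hS]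
    rw [zero_mul, ← this]
    simp only [add_mul, mul_add, ha₀, hp₂, hp₃]
    noncomm_ring
  have e₂ : (a₂ - a₀) * (c₁ - c₀) + (a₃ - a₀) * (c₂ - c₀) * G = 0 := by
    have hp₂ : G ^ 2 * c₀ = c₂ * G ^ 2 := by
      rw [pow_two, mul_assoc, hc₀, ← mul_assoc, hc₁, mul_assoc]
    have k₁ : (a₁ - a₀) * c₀ = c₀ * (a₁ - a₀) := (h₂.sub_left h₁).eq
    have k₂ : (a₂ - a₀) * c₀ = c₀ * (a₂ - a₀) := (h₃.sub_left h₁).eq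
    have k₃ : (a₃ - a₀) * c₀ = c₀ * (a₃ - a₀) := (h₄.sub_left h₁).eq
    refine hG.mul_left_injective (?_ : _ * G = 0 * G)
    have : ((a₁ - a₀) + (a₂ - a₀) * G + (a₃ - a₀) * G ^ 2) * c₀
        - c₀ * ((a₁ - a₀) + (a₂ - a₀) * G + (a₃ - a₀) * G ^ 2) = 0 := by simp [e₁]
    rw [zero_mul, ← this]
    simp only [add_mul, mul_add, mul_assoc _ _ c₀, hc₀, hp₂, k₁]
    simp only [← mul_assoc c₀, ← k₂, ← k₃]
    noncomm_ring
  have l₂ : (a₂ - a₀) * (c₁ - c₀) * f₀ = f₀ * ((a₂ - a₀) * (c₁ - c₀)) :=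
    ((h₆.sub_left h₅).mul_left (h₉.sub_left h₈)).eq
  have l₃ : (a₃ - a₀) * (c₂ - c₀) * f₀ = f₀ * ((a₃ - a₀) * (c₂ - c₀)) :=
    ((h₇.sub_left h₅).mul_left (h₁₀.sub_left h₈)).eq
  refine hG.mul_left_injective (?_ : _ * G = 0 * G)
  have : ((a₂ - a₀) * (c₁ - c₀) + (a₃ - a₀) * (c₂ - c₀) * G) * f₀
      - f₀ * ((a₂ - a₀) * (c₁ - c₀) + (a₃ - a₀) * (c₂ - c₀) * G) = 0 := by simp [e₂]
  rw [zero_mul, ← this]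
  simp only [add_mul, mul_add, mul_assoc _ G f₀, hf₀, l₂]
  simp only [← mul_assoc f₀ _ G, ← l₃]
  noncomm_ring

/-- In characteristic two, if `1 + G + G² + G³ = 0` for a unit `G` which permutes four commuting
units cyclically, then the fourth powers of opposite ones agree. -/
theorem pow_four_eq_pow_four (hA : ∀ x : A, x + x = 0) (hG : IsUnit G)
    (hS : 1 + G + G ^ 2 + G ^ 3 = 0) {x : ℕ → A} (hx : ∀ i, IsUnit (x i))
    (hcomm : ∀ i j, Commute (x i) (x j)) (hGx : ∀ i, G * x i = x (i + 1) * G)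
    (hx₄ : x 4 = x 0) : x 2 ^ 4 = x 0 ^ 4 := by
  have hmul : ∀ i j, G * (x i * x j) = x (i + 1) * x (j + 1) * G := fun i j => by
    rw [← mul_assoc, hGx, mul_assoc, hGx, mul_assoc]
  have hc : ∀ i j k, Commute (x i * x j) (x k) := fun i j k =>
    (hcomm i k).mul_left (hcomm j k)
  have h0 := sub_mul_sub_mul_sub_eq_zero hG hS (hmul 1 2) (hmul 2 3) (hmul 3 4)
    (hGx 0) (hGx 1) (hmul 0 1) (hc _ _ _) (hc _ _ _) (hc _ _ _) (hc _ _ _)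
    ((hc _ _ _).mul_right (hc _ _ _)) ((hc _ _ _).mul_right (hc _ _ _))
    ((hc _ _ _).mul_right (hc _ _ _)) (hc _ _ _).symm (hc _ _ _).symm (hc _ _ _).symm
  norm_num at h0
  have hx₅ : x 5 = x 1 := by
    refine hG.mul_left_injective (?_ : _ * G = _ * G)
    rw [← hGx 4, ← hGx 0, hx₄]
  rw [hx₄, hx₅] at h0
  have c₀₁ : x 0 * x 1 = x 1 * x 0 := (hcomm 0 1).eq
  have c₁₂ : x 2 * x 1 = x 1 * x 2 := (hcomm 2 1).eq
  have c₀₂ : x 2 * x 0 = x 0 * x 2 := (hcomm 2 0).eq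
  have hD : Commute (x 2 - x 0) (x 1) := (hcomm 2 1).sub_left (hcomm 0 1)
  have h1 : x 1 * x 1 * (x 2 - x 0) ^ 3 = 0 := by
    have e1 : x 0 * x 1 - x 1 * x 2 = - (x 1 * (x 2 - x 0)) := by rw [c₀₁]; noncomm_ring
    have e2 : x 1 * x 2 - x 0 * x 1 = (x 2 - x 0) * x 1 := by rw [← c₁₂]; noncomm_ring
    rw [e1] at h0
    rw [← neg_eq_zero, ← h0]
    have e3 : (x 2 - x 0) ^ 3 * x 1 = x 1 * (x 2 - x 0) ^ 3 := (hD.pow_left 3).eq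
    rw [e2]
    calc _ = - (x 1 * (x 1 * (x 2 - x 0) ^ 3)) := by rw [mul_assoc]
      _ = _ := by rw [← e3]; noncomm_ring
  have h3 : (x 2 - x 0) ^ 3 = 0 :=
    ((hx 1).mul (hx 1)).mul_right_injective (by simpa using h1)
  have h4 : (x 2 - x 0) ^ 4 = x 2 ^ 4 - x 0 ^ 4 := by
    have sq : ∀ a b : A, Commute a b → (a - b) ^ 2 = a ^ 2 - b ^ 2 := fun a b hab => by
      have h := hA (a * b - b ^ 2)
      have : (a - b) ^ 2 = a ^ 2 - b ^ 2 - (a * b - b ^ 2 + (a * b - b ^ 2)) := by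
        rw [pow_two, sub_mul, mul_sub, mul_sub, ← hab.eq]; noncomm_ring
      rw [this, h, sub_zero]
    rw [show 4 = 2 * 2 from rfl, pow_mul, pow_mul, pow_mul, sq _ _ (hcomm 2 0),
      sq _ _ ((hcomm 2 0).pow_pow 2 2)]
  rw [pow_succ, h3, zero_mul] at h4
  exact (sub_eq_zero.1 h4.symm)

end NormRelation

theorem map_conj_pow_four_eq {G M : Type*} [Group G] [AddCommGroup M] (ρ : G →* AddMonoid.End M)
    (hM : ∀ m : M, m + m = 0) {g e : G} (hg : g ^ 4 = 1)
    (hS : ∀ m, m + ρ g m + ρ (g ^ 2) m + ρ (g ^ 3) m = 0)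
    (hcomm : ∀ i j : ℕ, Commute (g ^ i * e * (g ^ i)⁻¹) (g ^ j * e * (g ^ j)⁻¹)) :
    ρ ((g ^ 2 * e * (g ^ 2)⁻¹) ^ 4) = ρ (e ^ 4) := by
  have hu : ∀ x, IsUnit (ρ x) := fun x => (Group.isUnit x).map ρ
  have := pow_four_eq_pow_four (A := AddMonoid.End M) (G := ρ g)
    (x := fun i => ρ (g ^ i * e * (g ^ i)⁻¹)) (fun f => AddMonoidHom.ext fun m => hM (f m)) (hu g)
    (AddMonoidHom.ext fun m => by rw [← map_pow, ← map_pow]; exact hS m) (fun i => hu _)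
    (fun i j => (hcomm i j).map ρ)
    (fun i => by rw [← map_mul, ← map_mul]; congr 1; rw [pow_succ']; group)
    (by simp [hg])
  rw [map_pow, map_pow, this]
  simp

theorem Subgroup.Normal.of_sup_eq_top {G : Type*} [Group G] {A B C : Subgroup G} (h : A ⊔ B = ⊤)
    (hA : ∀ a ∈ A, ∀ c ∈ C, a * c * a⁻¹ ∈ C) (hB : ∀ b ∈ B, ∀ c ∈ C, b * c * b⁻¹ ∈ C) :
    C.Normal := by
  rw [← Subgroup.normalizer_eq_top_iff, eq_top_iff, ← h, sup_le_iff]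
  have key : ∀ D : Subgroup G, (∀ a ∈ D, ∀ c ∈ C, a * c * a⁻¹ ∈ C) →
      D ≤ Subgroup.normalizer (C : Set G) := by
    intro D hD a ha
    rw [Subgroup.mem_normalizer_iff]
    refine fun c => ⟨hD a ha c, fun hc => ?_⟩
    simpa [mul_assoc] using hD a⁻¹ (D.inv_mem ha) _ hc
  exact ⟨key A hA, key B hB⟩

theorem Subgroup.eq_one_of_pow_four {G : Type*} [Group G] {E : Subgroup G} (hE : Odd (Nat.card E))
    {e : G} (he : e ∈ E) (h : e ^ 4 = 1) : e = 1 := by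
  rw [← orderOf_eq_one_iff]
  exact Nat.eq_one_of_dvd_coprimes (a := 4) (b := Nat.card E)
    (Nat.Coprime.pow_left 2 (Nat.coprime_two_left.2 hE)) (orderOf_dvd_of_pow_eq_one h)
    (Subgroup.orderOf_dvd_natCard E he)

/-- A core-free maximal subgroup `Q` of exponent dividing four has order at most two, provided there
is a non-trivial abelian normal subgroup of odd order and a faithful module in characteristic two
on which the elements of `Q` have trivial norm. -/
theorem mul_eq_one_of_faithful_module {G M : Type*} [Group G] [AddCommGroup M]
    (ρ : G →* AddMonoid.End M) (hρ : Function.Injective ρ) (hM : ∀ m : M, m + m = 0)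
    {Q E : Subgroup G} (hQ : IsCoatom Q) (hcore : Q.normalCore = ⊥) (hQ4 : ∀ g ∈ Q, g ^ 4 = 1)
    (hS : ∀ g ∈ Q, ∀ m, m + ρ g m + ρ (g ^ 2) m + ρ (g ^ 3) m = 0)
    [hEn : E.Normal] (hE : E ≠ ⊥) (hab : ∀ a ∈ E, ∀ b ∈ E, a * b = b * a)
    (hodd : Odd (Nat.card E)) {s t : G} (hs : s ∈ Q) (ht : t ∈ Q) (hs1 : s ≠ 1) (ht1 : t ≠ 1) :
    s * t = 1 := by
  have hcore' : ∀ N : Subgroup G, N.Normal → N ≤ Q → N = ⊥ := fun N hN hNQ => by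
    rw [eq_bot_iff, ← hcore]
    exact Subgroup.normal_le_normalCore.2 hNQ
  have hQE : Q ⊔ E = ⊤ := hQ.2 _ (lt_of_le_of_ne le_sup_left fun hc => hE
    (hcore' E hEn (hc ▸ le_sup_right)))
  have hfaith : ∀ q ∈ Q, (∀ e ∈ E, q * e = e * q) → q = 1 := by
    intro q hq hqe
    have : (Q ⊓ Subgroup.centralizer (E : Set G)).Normal := by
      refine .of_sup_eq_top hQE (fun a ha c hc => ⟨Q.mul_mem (Q.mul_mem ha hc.1) (Q.inv_mem ha),
        (inferInstance : (Subgroup.centralizer (E : Set G)).Normal).conj_mem c hc.2 a⟩) ?_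
      intro b hb c hc
      have : b * c * b⁻¹ = c := by
        rw [Subgroup.mem_centralizer_iff.1 hc.2 b hb]; group
      rwa [this]
    have h1 : q ∈ Q ⊓ Subgroup.centralizer (E : Set G) :=
      ⟨hq, Subgroup.mem_centralizer_iff.2 fun e he => (hqe e he).symm⟩
    rwa [hcore' _ this inf_le_left, Subgroup.mem_bot] at h1
  have hconj : ∀ g : G, ∀ e ∈ E, g * e * g⁻¹ ∈ E := fun g e he => hEn.conj_mem e he g
  have hsq : ∀ g ∈ Q, g * g = 1 := by
    intro g hg
    refine hfaith _ (Q.mul_mem hg hg) fun e he => ?_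
    have h1 := hρ (map_conj_pow_four_eq ρ hM (hQ4 g hg) (hS g hg)
      (fun i j => hab _ (hconj (g ^ i) e he) _ (hconj (g ^ j) e he)))
    have h2 : Commute (g ^ 2 * e * (g ^ 2)⁻¹) e := hab _ (hconj _ e he) _ he
    have h3 := Subgroup.eq_one_of_pow_four hodd
      (E.mul_mem (hconj (g ^ 2) e he) (E.inv_mem he))
      (by rw [h2.inv_right.mul_pow, h1, inv_pow, mul_inv_cancel])
    rw [mul_inv_eq_one, mul_inv_eq_iff_eq_mul, pow_two] at h3
    exact h3
  have hcommQ : ∀ a ∈ Q, ∀ b ∈ Q, a * b = b * a := by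
    intro a ha b hb
    have hi : ∀ x ∈ Q, x⁻¹ = x := fun x hx => inv_eq_of_mul_eq_one_left (hsq x hx)
    rw [← hi _ (Q.mul_mem ha hb), mul_inv_rev, hi a ha, hi b hb]
  have hinv : ∀ q ∈ Q, q ≠ 1 → ∀ e ∈ E, q * e * q⁻¹ = e⁻¹ := by
    intro q hq hq1
    have hD : (E ⊓ Subgroup.centralizer {q}).Normal := by
      refine .of_sup_eq_top hQE (fun a ha c hc => ⟨hconj a c hc.1, ?_⟩) ?_
      · have hc2 : Commute c q := Subgroup.mem_centralizer_singleton_iff.1 hc.2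
        have ha2 : Commute a q := hcommQ a ha q hq
        exact Subgroup.mem_centralizer_singleton_iff.2 ((ha2.mul_left hc2).mul_left ha2.inv_left)
      · intro b hb c hc
        have : b * c * b⁻¹ = c := by rw [hab b hb c hc.1]; group
        rwa [this]
    have hDbot : E ⊓ Subgroup.centralizer {q} = ⊥ := by
      by_contra hne
      have htop : Q ⊔ (E ⊓ Subgroup.centralizer {q}) = ⊤ :=
        hQ.2 _ (lt_of_le_of_ne le_sup_left fun hc => hne (hcore' _ hD (hc ▸ le_sup_right)))
      refine hq1 (hfaith q hq fun e he => ?_)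
      have : e ∈ Q ⊔ (E ⊓ Subgroup.centralizer {q}) := htop ▸ Subgroup.mem_top e
      obtain ⟨a, ha, d, hd, rfl⟩ := Subgroup.mem_sup_of_normal_right.1 this
      have haE : a ∈ E := (E.mul_mem_cancel_right hd.1).1 he
      rw [Subgroup.eq_one_of_pow_four hodd haE (hQ4 a ha), one_mul]
      exact (Subgroup.mem_centralizer_singleton_iff.1 hd.2).symm
    intro e he
    have h1 : e * (q * e * q⁻¹) ∈ E ⊓ Subgroup.centralizer {q} := by
      refine ⟨E.mul_mem he (hconj q e he), Subgroup.mem_centralizer_singleton_iff.2 ?_⟩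
      have hqi : q⁻¹ = q := inv_eq_of_mul_eq_one_left (hsq q hq)
      have := hab e he _ (hconj q e he)
      calc e * (q * e * q⁻¹) * q = e * q * e := by group
        _ = q * q * e * q⁻¹ * e := by rw [hsq q hq, hqi, one_mul]
        _ = q * (q * e * q⁻¹ * e) := by group
        _ = q * (e * (q * e * q⁻¹)) := by rw [this]
    rw [hDbot, Subgroup.mem_bot] at h1
    exact eq_inv_of_mul_eq_one_right h1
  refine hfaith _ (Q.mul_mem hs ht) fun e he => ?_
  have h1 := hinv t ht ht1 e he
  calc s * t * e = s * (t * e * t⁻¹) * s⁻¹ * (s * t) := by group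
    _ = e * (s * t) := by rw [h1, hinv s hs hs1 _ (E.inv_mem he), inv_inv]

/-- The action of a group by conjugation on a normal subgroup, written additively. -/
def conjEnd {X : Type*} [Group X] (V : Subgroup X) [V.Normal] :
    X →* AddMonoid.End (Additive V) where
  toFun x := MonoidHom.toAdditive (MulAut.conjNormal x : V ≃* V).toMonoidHom
  map_one' := by ext; simp; rfl
  map_mul' x y := by ext; simp; rfl

theorem conjEnd_apply {X : Type*} [Group X] (V : Subgroup X) [V.Normal]
    (x : X) (v : Additive V) : ((conjEnd V x v).toMul : X) = x * (v.toMul : X) * x⁻¹ := by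
  rfl

section NormalCore

variable {X : Type*} [Group X] (Q : Subgroup X)

theorem comap_map_mk'_normalCore :
    (Q.map (QuotientGroup.mk' Q.normalCore)).comap (QuotientGroup.mk' Q.normalCore) = Q := by
  rw [Subgroup.comap_map_eq, QuotientGroup.ker_mk', sup_eq_left.2 (Subgroup.normalCore_le Q)]

theorem isCoatom_map_mk'_normalCore {Q : Subgroup X} (hQ : IsCoatom Q) :
    IsCoatom (Q.map (QuotientGroup.mk' Q.normalCore)) := by
  refine ⟨fun h => hQ.1 ?_, fun B hB => ?_⟩
  · rw [← comap_map_mk'_normalCore Q, h, Subgroup.comap_top]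
  · have hsurj := QuotientGroup.mk'_surjective Q.normalCore
    have h1 := (Subgroup.comap_lt_comap_of_surjective hsurj).2 hB
    rw [comap_map_mk'_normalCore] at h1
    rw [← Subgroup.map_comap_eq_self_of_surjective hsurj B, hQ.2 _ h1,
      Subgroup.map_top_of_surjective _ hsurj]

theorem normalCore_map_mk'_normalCore :
    (Q.map (QuotientGroup.mk' Q.normalCore)).normalCore = ⊥ := by
  rw [eq_bot_iff]
  intro x hx
  induction x using QuotientGroup.induction_on with
  | H x =>
    refine (QuotientGroup.eq_one_iff x).2 fun y => ?_
    have h1 : (QuotientGroup.mk' Q.normalCore) (y * x * y⁻¹) ∈ _ := hx (y : X ⧸ Q.normalCore)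
    rwa [← Subgroup.mem_comap, comap_map_mk'_normalCore] at h1

end NormalCore

/-- A maximal subgroup `Q` of exponent dividing four has index at most two over its core, provided
the core is the centraliser of an elementary abelian normal subgroup contained in it, and the
quotient by the core has a non-trivial abelian normal subgroup of odd order. -/
theorem mul_mem_normalCore {X : Type*} [Group X] {Q V : Subgroup X} (hQ : IsCoatom Q)
    (hQ4 : ∀ g ∈ Q, g ^ 4 = 1) [V.Normal] (hVQ : V ≤ Q) (hVc : ∀ v ∈ V, ∀ w ∈ V, v * w = w * v)
    (hV2 : ∀ v ∈ V, v * v = 1)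
    (hC : ∀ x, x ∈ Q.normalCore ↔ ∀ v ∈ V, x * v = v * x)
    (hE : ∃ E : Subgroup (X ⧸ Q.normalCore), E.Normal ∧ E ≠ ⊥ ∧
      (∀ a ∈ E, ∀ b ∈ E, a * b = b * a) ∧ Odd (Nat.card E)) {s t : X} (hs : s ∈ Q) (ht : t ∈ Q)
    (hsR : s ∉ Q.normalCore) (htR : t ∉ Q.normalCore) : s * t ∈ Q.normalCore := by
  obtain ⟨E, hEn, hE1, hab, hodd⟩ := hE
  let _ : AddCommGroup (Additive V) :=
    { (inferInstance : AddGroup (Additive V)) with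
      add_comm := fun a b => Additive.toMul.injective
        (Subtype.ext (hVc _ a.toMul.2 _ b.toMul.2)) }
  have hker : ∀ x, x ∈ Q.normalCore ↔ conjEnd V x = 1 := by
    intro x
    rw [hC]
    constructor
    · intro h
      refine AddMonoidHom.ext fun v => ?_
      apply Additive.toMul.injective
      apply Subtype.ext
      exact (conjEnd_apply V x v).trans (by rw [h _ v.toMul.2, mul_inv_cancel_right]; rfl)
    · intro h v hv
      have h1 := conjEnd_apply V x (Additive.ofMul ⟨v, hv⟩)
      rw [h] at h1
      exact (eq_mul_inv_iff_mul_eq.1 h1).symm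
  let ρ : X ⧸ Q.normalCore →* AddMonoid.End (Additive V) :=
    QuotientGroup.lift Q.normalCore (conjEnd V) fun x hx => (hker x).1 hx
  have hρ : Function.Injective ρ := by
    rw [injective_iff_map_eq_one]
    intro x
    induction x using QuotientGroup.induction_on with
    | H x =>
      intro hx
      exact (QuotientGroup.eq_one_iff x).2 ((hker x).2 hx)
  have hnorm : ∀ g ∈ Q.map (QuotientGroup.mk' Q.normalCore), ∀ m,
      m + ρ g m + ρ (g ^ 2) m + ρ (g ^ 3) m = 0 := by
    rintro _ ⟨g, hg, rfl⟩ m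
    change m + conjEnd V g m + conjEnd V (g ^ 2) m + conjEnd V (g ^ 3) m = 0
    apply Additive.toMul.injective
    apply Subtype.ext
    simp only [toMul_add, Subgroup.coe_mul, conjEnd_apply, toMul_zero, Subgroup.coe_one]
    have h1 := hQ4 _ (Q.mul_mem (hVQ m.toMul.2) hg)
    have h2 := hQ4 g hg
    calc _ = ((m.toMul : X) * g) ^ 4 * (g ^ 4)⁻¹ := by
          simp only [pow_succ, pow_zero, one_mul]; group
      _ = 1 := by rw [h1, h2]; simp
  have := mul_eq_one_of_faithful_module (M := Additive V) ρ hρ (fun m => ?_)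
    (isCoatom_map_mk'_normalCore hQ) (normalCore_map_mk'_normalCore Q) ?_ hnorm hE1 hab hodd
    (Subgroup.mem_map_of_mem _ hs) (Subgroup.mem_map_of_mem _ ht)
    (fun hc => hsR ((QuotientGroup.eq_one_iff s).1 hc))
    (fun hc => htR ((QuotientGroup.eq_one_iff t).1 hc))
  · exact (QuotientGroup.eq_one_iff (s * t)).1 this
  · apply Additive.toMul.injective
    exact Subtype.ext (hV2 _ m.toMul.2)
  · rintro _ ⟨g, hg, rfl⟩
    rw [← map_pow, hQ4 g hg, map_one]

/-- The elements `h * y₁ * h * y₂ * ⋯ * h * q` with `n + 1` factors `h`, separated by elements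
`yᵢ ∈ X \ Q`, and with `q ∈ Q`.  They encode the non-backtracking paths of length `n + 1` in the
coset graph of the amalgam of `X` and `⟨Q, h⟩`. -/
def pathElements {G : Type*} [Group G] (X Q : Subgroup G) (h : G) : ℕ → Set G
  | 0 => {g | ∃ q ∈ Q, g = h * q}
  | n + 1 => {g | ∃ y ∈ X, y ∉ Q ∧ ∃ f ∈ pathElements X Q h n, g = h * y * f}

section PathElements

variable {G : Type*} [Group G] {X Q : Subgroup G} {h : G}

theorem pathElements_mul_mul (hQX : Q ≤ X) {m n : ℕ}
    {k y f : G} (hk : k ∈ pathElements X Q h m) (hy : y ∈ X) (hyQ : y ∉ Q)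
    (hf : f ∈ pathElements X Q h n) : k * y * f ∈ pathElements X Q h (m + n + 1) := by
  induction m generalizing k with
  | zero =>
    obtain ⟨q, hq, rfl⟩ := hk
    rw [Nat.zero_add]
    exact ⟨q * y, X.mul_mem (hQX hq) hy, fun hc => hyQ ((Q.mul_mem_cancel_left hq).1 hc),
      f, hf, by group⟩
  | succ m ih =>
    obtain ⟨x, hx, hxQ, k', hk', rfl⟩ := hk
    have := ih hk'
    rw [show m + 1 + n + 1 = (m + n + 1) + 1 by omega]
    exact ⟨x, hx, hxQ, _, this, by group⟩

theorem exists_of_mem_pathElements_add {m n : ℕ} {g : G}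
    (hg : g ∈ pathElements X Q h (m + n + 1)) :
    ∃ k ∈ pathElements X Q h m, ∃ y ∈ X, y ∉ Q ∧ ∃ f ∈ pathElements X Q h n, g = k * y * f := by
  induction m generalizing g with
  | zero =>
    rw [Nat.zero_add] at hg
    obtain ⟨y, hy, hyQ, f, hf, rfl⟩ := hg
    exact ⟨h, ⟨1, Q.one_mem, by simp⟩, y, hy, hyQ, f, hf, rfl⟩
  | succ m ih =>
    rw [show m + 1 + n + 1 = (m + n + 1) + 1 by omega] at hg
    obtain ⟨y, hy, hyQ, f, hf, rfl⟩ := hg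
    obtain ⟨k, hk, x, hx, hxQ, f', hf', rfl⟩ := ih hf
    exact ⟨h * y * k, ⟨y, hy, hyQ, k, hk, rfl⟩, x, hx, hxQ, f', hf', by group⟩

theorem inv_mem_pathElements (hQX : Q ≤ X) (hnorm : ∀ q ∈ Q, h⁻¹ * q * h ∈ Q) (hh : h ^ 2 ∈ Q)
    {n : ℕ} {g : G} (hg : g ∈ pathElements X Q h n) : g⁻¹ ∈ pathElements X Q h n := by
  have hinv : h⁻¹ ∈ pathElements X Q h 0 := ⟨(h ^ 2)⁻¹, Q.inv_mem hh, by group⟩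
  induction n generalizing g with
  | zero =>
    obtain ⟨q, hq, rfl⟩ := hg
    refine ⟨h⁻¹ * q⁻¹ * h * (h ^ 2)⁻¹, Q.mul_mem (hnorm _ (Q.inv_mem hq)) (Q.inv_mem hh), by group⟩
  | succ n ih =>
    obtain ⟨y, hy, hyQ, f, hf, rfl⟩ := hg
    have := pathElements_mul_mul hQX (ih hf) (X.inv_mem hy) (by simpa using hyQ) hinv
    simpa [mul_assoc] using this

end PathElements

/-- If `u` and `u * a` have order dividing four, `a` is an involution, and `u ^ 2` conjugates `a` to
`a` itself or to its conjugate by `u * a * u⁻¹`, then `a` commutes with `u * a * u⁻¹`. -/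
theorem commute_conj_of_pow_four {G : Type*} [Group G] {u a : G} (hu : u ^ 4 = 1)
    (hua : (u * a) ^ 4 = 1) (ha : a * a = 1)
    (hact : u ^ 2 * a = a * u ^ 2 ∨
      u ^ 2 * a * (u ^ 2)⁻¹ = u * a * u⁻¹ * a * (u * a * u⁻¹)⁻¹) :
    a * (u * a * u⁻¹) = u * a * u⁻¹ * a := by
  have hai : a⁻¹ = a := inv_eq_of_mul_eq_one_left ha
  set b := u * a * u⁻¹ with hb
  have hbb : b * b = 1 := by
    rw [hb, show u * a * u⁻¹ * (u * a * u⁻¹) = u * (a * a) * u⁻¹ by group, ha]; group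
  have hbi : b⁻¹ = b := inv_eq_of_mul_eq_one_left hbb
  have key : b * (u ^ 2 * a * (u ^ 2)⁻¹) * (u * (u ^ 2 * a * (u ^ 2)⁻¹) * u⁻¹) * a = 1 := by
    have h1 : b * (u ^ 2 * a * (u ^ 2)⁻¹) * (u * (u ^ 2 * a * (u ^ 2)⁻¹) * u⁻¹) *
        (u ^ 4 * a * (u ^ 4)⁻¹) = (u * a) ^ 4 * (u ^ 4)⁻¹ := by
      rw [hb]; simp only [pow_succ, pow_zero, one_mul]; group
    rw [hua, hu] at h1
    simpa using h1
  rcases hact with hact | hact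
  · rw [hact, mul_assoc a, mul_inv_cancel, mul_one, ← hb] at key
    have : b * a = (b * a)⁻¹ := eq_inv_of_mul_eq_one_left (by simpa [mul_assoc] using key)
    rw [this, mul_inv_rev, hai, hbi]
  · have h2 : u * (u ^ 2 * a * (u ^ 2)⁻¹) * u⁻¹
        = (u ^ 2 * a * (u ^ 2)⁻¹) * b * (u ^ 2 * a * (u ^ 2)⁻¹)⁻¹ := by
      rw [hact]
      have : u * b * u⁻¹ = u ^ 2 * a * (u ^ 2)⁻¹ := by rw [hb, pow_two]; group
      rw [show u * (b * a * b⁻¹) * u⁻¹ = (u * b * u⁻¹) * b * (u * b * u⁻¹)⁻¹ by rw [hb]; group,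
        this, hact]
    rw [h2, hact, hbi] at key
    have h3 : (b * a * b)⁻¹ = b * a * b := by simp [hai, hbi, mul_assoc]
    rw [h3] at key
    have h4 : b * a * b * a = 1 := by
      have : b * (b * a * b) * (b * a * b * b * (b * a * b)) * a
          = (b * b) * a * (b * b) * a * (b * b) * b * a * b * a := by group
      rw [this, hbb] at key
      simpa [ha] using key
    have : b * a = (b * a)⁻¹ := eq_inv_of_mul_eq_one_left (by simpa [mul_assoc] using h4)
    rw [this, mul_inv_rev, hai, hbi]

/-- A configuration of a group `X` with a maximal subgroup `Q` having a normal subgroup `R` of `X`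
of index at most two, an elementary abelian normal subgroup `V` of `X` with `C_X(V) = R`,
an element `z ∈ V` with `C_X(z) = Q`, and an element `h` which normalises `Q` and squares into it,
in a group where elements of order eight do not occur. -/
structure IsPushingUpConfiguration {G : Type*} [Group G] (X Q R V : Subgroup G) (h z : G) :
    Prop where
  pow_four : ∀ x : G, x ^ 8 = 1 → x ^ 4 = 1
  pow_four_of_mem : ∀ q ∈ Q, q ^ 4 = 1
  covBy : Q ⋖ X
  le : R ≤ Q
  conj_mem : ∀ x ∈ X, ∀ r ∈ R, x * r * x⁻¹ ∈ R
  mul_mem : ∀ s ∈ Q, ∀ t ∈ Q, s ∉ R → t ∉ R → s * t ∈ R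
  self_normalizing : ∀ x ∈ X, (∀ q ∈ Q, x⁻¹ * q * x ∈ Q) → x ∈ Q
  V_le : V ≤ R
  V_conj_mem : ∀ x ∈ X, ∀ v ∈ V, x * v * x⁻¹ ∈ V
  V_mul_self : ∀ v ∈ V, v * v = 1
  V_comm : ∀ r ∈ R, ∀ v ∈ V, r * v = v * r
  mem_of_V_comm : ∀ x ∈ X, (∀ v ∈ V, x * v = v * x) → x ∈ R
  z_mem : z ∈ V
  z_comm : ∀ q ∈ Q, q * z = z * q
  mem_of_z_comm : ∀ x ∈ X, x * z = z * x → x ∈ Q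
  h_conj_mem : ∀ q ∈ Q, h * q * h⁻¹ ∈ Q
  h_conj_mem' : ∀ q ∈ Q, h⁻¹ * q * h ∈ Q
  h_sq : h ^ 2 ∈ Q

namespace IsPushingUpConfiguration

variable {G : Type*} [Group G] {X Q R V : Subgroup G} {h z : G}

theorem conj_mem' (H : IsPushingUpConfiguration X Q R V h z) {x r : G} (hx : x ∈ X) (hr : r ∈ R) :
    x⁻¹ * r * x ∈ R := by
  simpa using H.conj_mem x⁻¹ (X.inv_mem hx) r hr

theorem V_conj_mem' (H : IsPushingUpConfiguration X Q R V h z) {x v : G} (hx : x ∈ X)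
    (hv : v ∈ V) : x⁻¹ * v * x ∈ V := by
  simpa using H.V_conj_mem x⁻¹ (X.inv_mem hx) v hv

theorem not_mem_conj (H : IsPushingUpConfiguration X Q R V h z) {s y : G} (hs : s ∈ Q)
    (hsR : s ∉ R) (hy : y ∈ X) (hyQ : y ∉ Q) : y⁻¹ * s * y ∉ Q := by
  intro hc
  refine hyQ (H.self_normalizing y hy fun q hq => ?_)
  by_cases hqR : q ∈ R
  · exact H.le (H.conj_mem' hy hqR)
  · have h1 : y⁻¹ * (q * s) * y ∈ Q := H.le (H.conj_mem' hy (H.mul_mem q hq s hs hqR hsR))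
    have h2 : y⁻¹ * q * y = (y⁻¹ * (q * s) * y) * (y⁻¹ * s * y)⁻¹ := by group
    rw [h2]
    exact Q.mul_mem h1 (Q.inv_mem hc)

/-- An element of `V` centralised by `R` and by one element of `Q \ R` is centralised by `Q`. -/
theorem comm_of_comm (H : IsPushingUpConfiguration X Q R V h z) {s v : G} (hs : s ∈ Q)
    (hsR : s ∉ R) (hv : v ∈ V) (hsv : s * v = v * s) : ∀ q ∈ Q, q * v = v * q := by
  intro q hq
  by_cases hqR : q ∈ R
  · exact H.V_comm q hqR v hv
  · have h1 : Commute (q * s) v := H.V_comm _ (H.mul_mem q hq s hs hqR hsR) v hv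
    have h2 : Commute (q * s * s⁻¹) v := h1.mul_left (Commute.inv_left hsv)
    simpa using h2.eq

theorem conj_z_not_comm (H : IsPushingUpConfiguration X Q R V h z) {u : G} (hu : u ∈ X)
    (huQ : u ∉ Q) : ¬ ∀ q ∈ Q, q * (u * z * u⁻¹) = (u * z * u⁻¹) * q := by
  intro hc
  refine huQ (H.self_normalizing u hu fun q hq => ?_)
  refine H.mem_of_z_comm _ (X.mul_mem (X.mul_mem (X.inv_mem hu) (H.covBy.le hq)) hu) ?_
  have := hc q hq
  calc u⁻¹ * q * u * z = u⁻¹ * (q * (u * z * u⁻¹)) * u := by group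
    _ = z * (u⁻¹ * q * u) := by rw [this]; group

theorem comm_of_comm_conj (H : IsPushingUpConfiguration X Q R V h z) {y c : G} (hy : y ∈ X)
    (hyQ : y ∉ Q) (hc : ∀ q ∈ Q, q * c = c * q)
    (hc' : ∀ q ∈ Q, q * (y⁻¹ * c * y) = (y⁻¹ * c * y) * q) : ∀ x ∈ X, x * c = c * x := by
  have h1 : Q ≤ X ⊓ Subgroup.centralizer {c} := by
    refine le_inf H.covBy.le fun q hq => Subgroup.mem_centralizer_singleton_iff.2 (hc q hq)
  rcases H.covBy.eq_or_eq h1 inf_le_left with h2 | h2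
  · exfalso
    refine hyQ ?_
    have : y⁻¹ ∈ Q := H.self_normalizing _ (X.inv_mem hy) fun q hq => ?_
    · simpa using this
    · rw [← h2]
      refine ⟨X.mul_mem (X.mul_mem (X.inv_mem (X.inv_mem hy)) (H.covBy.le hq)) (X.inv_mem hy),
        Subgroup.mem_centralizer_singleton_iff.2 ?_⟩
      have := hc' q hq
      calc y⁻¹⁻¹ * q * y⁻¹ * c = y * (q * (y⁻¹ * c * y)) * y⁻¹ := by group
        _ = c * (y⁻¹⁻¹ * q * y⁻¹) := by rw [this]; group
  · intro x hx
    rw [← h2] at hx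
    exact Subgroup.mem_centralizer_singleton_iff.1 hx.2

/-- If `C_V(Q)` has index at most two in `V`, then `X` has three cosets modulo `Q`, and an element
of `Q \ R` interchanges the two non-trivial ones. -/
theorem mem_or_mem (H : IsPushingUpConfiguration X Q R V h z)
    (hV : ∀ v ∈ V, ∀ w ∈ V, (¬ ∀ q ∈ Q, q * v = v * q) → (¬ ∀ q ∈ Q, q * w = w * q) →
      ∀ q ∈ Q, q * (v * w) = (v * w) * q)
    {s y y' : G} (hs : s ∈ Q) (hsR : s ∉ R) (hy : y ∈ X) (hyQ : y ∉ Q) (hy' : y' ∈ X)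
    (hyQ' : y' ∉ Q) : y⁻¹ * y' ∈ Q ∨ (s * y)⁻¹ * y' ∈ Q := by
  by_contra! hcon
  obtain ⟨h1, h2⟩ := hcon
  have hsX := H.covBy.le hs
  have hsy : s * y ∈ X := X.mul_mem hsX hy
  have hsyQ : s * y ∉ Q := fun hc => hyQ ((Q.mul_mem_cancel_left hs).1 hc)
  have hsyy : y⁻¹ * (s * y) ∉ Q := by
    rw [← mul_assoc]; exact H.not_mem_conj hs hsR hy hyQ
  set a := s * y * z * (s * y)⁻¹ with ha
  set b := y' * z * y'⁻¹ with hb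
  have haV : a ∈ V := H.V_conj_mem _ hsy _ H.z_mem
  have hbV : b ∈ V := H.V_conj_mem _ hy' _ H.z_mem
  have hc := hV a haV b hbV (H.conj_z_not_comm hsy hsyQ) (H.conj_z_not_comm hy' hyQ')
  have hc' := hV _ (H.V_conj_mem' hy haV) _ (H.V_conj_mem' hy hbV)
    (by
      have := H.conj_z_not_comm (X.mul_mem (X.inv_mem hy) hsy) hsyy
      rwa [show y⁻¹ * (s * y) * z * (y⁻¹ * (s * y))⁻¹ = y⁻¹ * a * y by rw [ha]; group] at this)
    (by
      have := H.conj_z_not_comm (X.mul_mem (X.inv_mem hy) hy') h1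
      rwa [show y⁻¹ * y' * z * (y⁻¹ * y')⁻¹ = y⁻¹ * b * y by rw [hb]; group] at this)
  rw [show y⁻¹ * a * y * (y⁻¹ * b * y) = y⁻¹ * (a * b) * y by group] at hc'
  have hX := H.comm_of_comm_conj hy hyQ hc hc'
  have key : y'⁻¹ * (s * y) ∈ Q := by
    have : (y'⁻¹ * (s * y))⁻¹ ∈ Q := by
      refine H.self_normalizing _ (X.inv_mem (X.mul_mem (X.inv_mem hy') hsy)) fun q hq => ?_
      refine H.mem_of_z_comm _ ?_ ?_
      · have := X.mul_mem (X.inv_mem hy') hsy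
        exact X.mul_mem (X.mul_mem (X.inv_mem (X.inv_mem this)) (H.covBy.le hq)) (X.inv_mem this)
      · set k := s * y * q * (s * y)⁻¹ with hk
        have hkX : k ∈ X := X.mul_mem (X.mul_mem hsy (H.covBy.le hq)) (X.inv_mem hsy)
        have hka : Commute k a := by
          have := H.z_comm q hq
          change k * a = a * k
          rw [hk, ha]
          calc s * y * q * (s * y)⁻¹ * (s * y * z * (s * y)⁻¹)
              = s * y * (q * z) * (s * y)⁻¹ := by group
            _ = _ := by rw [this]; group
        have hkab : Commute k (a * b) := hX k hkX
        have hkb : Commute k b := by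
          have := (hka.inv_right).mul_right hkab
          simpa using this
        calc (y'⁻¹ * (s * y))⁻¹⁻¹ * q * (y'⁻¹ * (s * y))⁻¹ * z = y'⁻¹ * (k * b) * y' := by
              rw [hk, hb]; group
          _ = y'⁻¹ * (b * k) * y' := by rw [hkb.eq]
          _ = _ := by rw [hk, hb]; group
    exact Q.inv_mem_iff.1 this
  refine h2 ?_
  have := Q.inv_mem key
  simpa [mul_assoc] using this

theorem mem_of_forall_lt (H : IsPushingUpConfiguration X Q R V h z) {b : ℕ}
    (hmin : ∀ n < b, ∀ g ∈ pathElements X Q h n, ∀ v ∈ V, g⁻¹ * v * g ∈ R) {g v : G}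
    (hg : g ∈ pathElements X Q h b) (hv : v ∈ V) : g⁻¹ * v * g ∈ Q := by
  have base : ∀ r ∈ R, ∀ f ∈ pathElements X Q h 0, f⁻¹ * r * f ∈ Q := by
    rintro r hr _ ⟨q, hq, rfl⟩
    have := Q.mul_mem (Q.mul_mem (Q.inv_mem hq) (H.h_conj_mem' r (H.le hr))) hq
    simpa [mul_assoc] using this
  cases b with
  | zero => exact base v (H.V_le hv) g hg
  | succ m =>
    obtain ⟨k, hk, y, hy, -, f, hf, rfl⟩ := exists_of_mem_pathElements_add (n := 0) hg
    have := base _ (H.conj_mem' hy (hmin m (Nat.lt_succ_self m) k hk v hv)) f hf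
    simpa [mul_assoc] using this

/-- At the critical distance, `C_V(Q)` has index at most two in `V`. -/
theorem comm_mul_of_critical (H : IsPushingUpConfiguration X Q R V h z) {b : ℕ}
    (hmin : ∀ n < b, ∀ g ∈ pathElements X Q h n, ∀ v ∈ V, g⁻¹ * v * g ∈ R) {g v₀ : G}
    (hg : g ∈ pathElements X Q h b) (hv₀ : v₀ ∈ V) (hgv : g⁻¹ * v₀ * g ∉ R) :
    ∀ v ∈ V, ∀ w ∈ V, (¬ ∀ q ∈ Q, q * v = v * q) → (¬ ∀ q ∈ Q, q * w = w * q) →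
      ∀ q ∈ Q, q * (v * w) = (v * w) * q := by
  have hg' := inv_mem_pathElements H.covBy.le H.h_conj_mem' H.h_sq hg
  have hsQ := H.mem_of_forall_lt hmin hg hv₀
  have hcen : ∀ v ∈ V, g * v * g⁻¹ ∈ R → ∀ q ∈ Q, q * v = v * q := by
    intro v hv hvR
    refine H.comm_of_comm hsQ hgv hv ?_
    have := H.V_comm _ hvR v₀ hv₀
    calc g⁻¹ * v₀ * g * v = g⁻¹ * (v₀ * (g * v * g⁻¹)) * g := by group
      _ = v * (g⁻¹ * v₀ * g) := by rw [← this]; group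
  intro v hv w hw hvn hwn
  refine hcen _ (V.mul_mem hv hw) ?_
  have hQ : ∀ u ∈ V, g * u * g⁻¹ ∈ Q := fun u hu => by
    simpa using H.mem_of_forall_lt hmin hg' hu
  have := H.mul_mem _ (hQ v hv) _ (hQ w hw) (fun hc => hvn (hcen v hv hc))
    (fun hc => hwn (hcen w hw hc))
  simpa [mul_assoc] using this

/-- Up to the critical distance, `Q` is transitive on paths. -/
theorem exists_eq_mul_mul (H : IsPushingUpConfiguration X Q R V h z) {b : ℕ}
    (hmin : ∀ n < b, ∀ g ∈ pathElements X Q h n, ∀ v ∈ V, g⁻¹ * v * g ∈ R) {g v₀ : G}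
    (hg : g ∈ pathElements X Q h b) (hv₀ : v₀ ∈ V) (hgv : g⁻¹ * v₀ * g ∉ R) {n : ℕ} (hn : n ≤ b) :
    ∀ f ∈ pathElements X Q h n, ∀ f' ∈ pathElements X Q h n, ∃ q ∈ Q, ∃ q' ∈ Q,
      f' = q * f * q' := by
  induction n with
  | zero =>
    rintro _ ⟨q, hq, rfl⟩ _ ⟨q', hq', rfl⟩
    exact ⟨1, Q.one_mem, q⁻¹ * q', Q.mul_mem (Q.inv_mem hq) hq', by group⟩
  | succ n ih =>
    intro f hf f' hf'
    obtain ⟨k, hk, y, hy, hyQ, _, ⟨q₁, hq₁, rfl⟩, rfl⟩ :=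
      exists_of_mem_pathElements_add (m := n) (n := 0) hf
    obtain ⟨k', hk', y', hy', hyQ', _, ⟨q₂, hq₂, rfl⟩, rfl⟩ :=
      exists_of_mem_pathElements_add (m := n) (n := 0) hf'
    obtain ⟨s, hs, hsR, hks⟩ : ∃ s ∈ Q, s ∉ R ∧ k * s * k⁻¹ ∈ Q := by
      obtain ⟨m, rfl⟩ : ∃ m, b = m + n + 1 := ⟨b - n - 1, by omega⟩
      have hsQ := H.mem_of_forall_lt hmin hg hv₀
      obtain ⟨l, hl, x, hx, -, e, he, rfl⟩ := exists_of_mem_pathElements_add hg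
      obtain ⟨q, hq, q', hq', rfl⟩ := ih (by omega) k hk e he
      have hR := H.le (H.conj_mem' hx (hmin m (by omega) l hl v₀ hv₀))
      refine ⟨q' * ((l * x * (q * k * q'))⁻¹ * v₀ * (l * x * (q * k * q'))) * q'⁻¹,
        Q.mul_mem (Q.mul_mem hq' hsQ) (Q.inv_mem hq'), fun hc => hgv ?_, ?_⟩
      · have := H.conj_mem' (H.covBy.le hq') hc
        simpa [mul_assoc] using this
      · have := Q.mul_mem (Q.mul_mem (Q.inv_mem hq) hR) hq
        convert this using 1
        group
    obtain ⟨q, hq, q', hq', rfl⟩ := ih (by omega) k hk k' hk'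
    have hqyX : q' * y' ∈ X := X.mul_mem (H.covBy.le hq') hy'
    have hqyQ : q' * y' ∉ Q := fun hc => hyQ' ((Q.mul_mem_cancel_left hq').1 hc)
    rcases H.mem_or_mem (H.comm_mul_of_critical hmin hg hv₀ hgv) hs hsR hy hyQ hqyX hqyQ
      with hc | hc
    · exact ⟨q, hq, q₁⁻¹ * (h⁻¹ * (y⁻¹ * (q' * y')) * h) * q₂,
        Q.mul_mem (Q.mul_mem (Q.inv_mem hq₁) (H.h_conj_mem' _ hc)) hq₂, by group⟩
    · exact ⟨q * (k * s * k⁻¹), Q.mul_mem hq hks, q₁⁻¹ * (h⁻¹ * ((s * y)⁻¹ * (q' * y')) * h) * q₂,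
        Q.mul_mem (Q.mul_mem (Q.inv_mem hq₁) (H.h_conj_mem' _ hc)) hq₂, by group⟩

theorem conj_V_mem (H : IsPushingUpConfiguration X Q R V h z) (n : ℕ) :
    ∀ g ∈ pathElements X Q h n, ∀ v ∈ V, g⁻¹ * v * g ∈ R := by
  induction n using Nat.strong_induction_on with
  | _ b hmin =>
  by_contra! hcon
  obtain ⟨g, hg, v₀, hv₀, hgv⟩ := hcon
  obtain ⟨q, hq, q', hq', hqq⟩ := H.exists_eq_mul_mul hmin hg hv₀ hgv le_rfl g hg g⁻¹
    (inv_mem_pathElements H.covBy.le H.h_conj_mem' H.h_sq hg)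
  set u := (g * q')⁻¹ with hu
  have hu2 : u ^ 2 ∈ Q := by
    have h1 : u ^ 2 = (q'⁻¹ * g⁻¹ * q'⁻¹) * g⁻¹ := by rw [hu, pow_two]; group
    rw [hqq] at h1
    have h2 : u ^ 2 = q'⁻¹ * q := by
      rw [h1]
      have : q'⁻¹ * (q * g * q') * q'⁻¹ * (q * g * q') = q'⁻¹ * q * (g * (q * g * q')) := by group
      rw [this, ← hqq]; group
    rw [h2]
    exact Q.mul_mem (Q.inv_mem hq') hq
  have huV : ∀ v ∈ V, u * v * u⁻¹ ∈ Q := fun v hv => by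
    have := Q.mul_mem (Q.mul_mem (Q.inv_mem hq') (H.mem_of_forall_lt hmin hg hv)) hq'
    convert this using 1
    rw [hu]; group
  have hu₀ : u * v₀ * u⁻¹ ∉ R := fun hc => hgv <| by
    have := H.conj_mem q' (H.covBy.le hq') _ hc
    convert this using 1
    rw [hu]; group
  have hpow : ∀ x : G, x ^ 2 ∈ Q → x ^ 4 = 1 := fun x hx =>
    H.pow_four x (by rw [show 8 = 2 * 4 by norm_num, pow_mul]; exact H.pow_four_of_mem _ hx)
  have hcen : ∀ a ∈ V, u * a * u⁻¹ ∉ R → ∀ q ∈ Q, q * a = a * q := by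
    intro a ha haR
    refine H.comm_of_comm (huV a ha) haR ha (commute_conj_of_pow_four (hpow u hu2) (hpow _ ?_)
      (H.V_mul_self a ha) ?_).symm
    · have : (u * a) ^ 2 = u * a * u⁻¹ * u ^ 2 * a := by rw [pow_two, pow_two]; group
      rw [this]
      exact Q.mul_mem (Q.mul_mem (huV a ha) hu2) (H.le (H.V_le ha))
    · by_cases hR : u ^ 2 ∈ R
      · exact Or.inl (H.V_comm _ hR a ha)
      · right
        set b := u * a * u⁻¹ with hb
        have hbQ : b ∈ Q := huV a ha
        have hbX : b ∈ X := H.covBy.le hbQ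
        have h1 := H.mul_mem _ hu2 _ (Q.inv_mem hbQ) hR (fun hc => haR (R.inv_mem_iff.1 hc))
        have h2 := H.V_comm _ h1 _ (H.V_conj_mem b hbX a ha)
        calc u ^ 2 * a * (u ^ 2)⁻¹
            = (u ^ 2 * b⁻¹ * (b * a * b⁻¹)) * (u ^ 2 * b⁻¹)⁻¹ := by group
          _ = b * a * b⁻¹ := by rw [h2]; group
  refine hu₀ (H.mem_of_V_comm _ (H.covBy.le (huV _ hv₀)) fun w hw => ?_)
  by_cases hwR : u * w * u⁻¹ ∈ R
  · have h1 : u * (v₀ * w) * u⁻¹ ∉ R := fun hc => hu₀ <| by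
      have := R.mul_mem hc (R.inv_mem hwR)
      convert this using 1
      group
    have h2 : Commute _ (v₀ * w) := hcen _ (V.mul_mem hv₀ hw) h1 _ (huV _ hv₀)
    have h3 : Commute _ v₀ := hcen _ hv₀ hu₀ _ (huV _ hv₀)
    simpa using (h3.inv_right.mul_right h2).eq
  · exact hcen w hw hwR _ (huV _ hv₀)

/-- In a pushing-up configuration, `z` lies in a subgroup of `Q` normalised by `X` and `h`. -/
theorem exists_normalized (H : IsPushingUpConfiguration X Q R V h z) :
    ∃ W : Subgroup G, z ∈ W ∧ W ≤ Q ∧ (∀ x ∈ X, ∀ w ∈ W, x * w * x⁻¹ ∈ W) ∧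
      ∀ w ∈ W, h * w * h⁻¹ ∈ W := by
  let W : Subgroup G := R ⊓ ⨅ n, ⨅ g ∈ pathElements X Q h n, ⨅ x ∈ X,
    R.comap (MulAut.conj (x * g)⁻¹).toMonoidHom
  have memW : ∀ w, w ∈ W ↔ w ∈ R ∧ ∀ n, ∀ g ∈ pathElements X Q h n, ∀ x ∈ X,
      (x * g)⁻¹ * w * (x * g) ∈ R := by
    intro w
    simp [W, Subgroup.mem_iInf, Subgroup.mem_inf, mul_assoc]
  refine ⟨W, ?_, inf_le_left.trans H.le, ?_, ?_⟩
  · rw [memW]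
    refine ⟨H.V_le H.z_mem, fun n g hg x hx => ?_⟩
    have := H.conj_V_mem n g hg _ (H.V_conj_mem' hx H.z_mem)
    simpa [mul_assoc] using this
  · intro x hx w hw
    rw [memW] at hw ⊢
    refine ⟨H.conj_mem x hx w hw.1, fun n g hg y hy => ?_⟩
    have := hw.2 n g hg (x⁻¹ * y) (X.mul_mem (X.inv_mem hx) hy)
    simpa [mul_assoc] using this
  · intro w hw
    rw [memW] at hw ⊢
    have hinv : h⁻¹ ∈ pathElements X Q h 0 := ⟨(h ^ 2)⁻¹, Q.inv_mem H.h_sq, by group⟩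
    refine ⟨by simpa using hw.2 0 _ hinv 1 X.one_mem, fun n g hg x hx => ?_⟩
    by_cases hxQ : x ∈ Q
    · have hq := H.h_conj_mem' x hxQ
      cases n with
      | zero =>
        obtain ⟨q, hq', rfl⟩ := hg
        have := H.conj_mem' (H.covBy.le (Q.mul_mem hq hq')) hw.1
        convert this using 1
        group
      | succ n =>
        obtain ⟨y, hy, -, f, hf, rfl⟩ := hg
        have := hw.2 n f hf (h⁻¹ * x * h * y) (X.mul_mem (H.covBy.le hq) hy)
        convert this using 1
        group
    · have := hw.2 _ _ (pathElements_mul_mul H.covBy.le hinv hx hxQ hg) 1 X.one_mem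
      convert this using 1
      group

end IsPushingUpConfiguration

/-- A `p`-subgroup is conjugate into any given Sylow `p`-subgroup. -/
theorem IsPGroup.exists_conj_mem_sylow {G : Type*} [Group G] [Finite G] {p : ℕ} [Fact p.Prime]
    {P : Subgroup G} (hP : IsPGroup p P) (S : Sylow p G) : ∃ g : G, ∀ x ∈ P, g * x * g⁻¹ ∈ S := by
  obtain ⟨L, hL⟩ := hP.exists_le_sylow
  obtain ⟨g, rfl⟩ := MulAction.exists_smul_eq G L S
  exact ⟨g, fun x hx => Subgroup.smul_mem_pointwise_smul x (MulAut.conj g) _ (hL hx)⟩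

theorem isPGroup_zpowers {G : Type*} [Group G] {p n : ℕ} {x : G} (hx : x ^ p ^ n = 1) :
    IsPGroup p (Subgroup.zpowers x) := by
  rintro ⟨_, m, rfl⟩
  refine ⟨n, Subtype.ext ?_⟩
  change (x ^ m) ^ p ^ n = 1
  rw [← zpow_natCast, zpow_comm, zpow_natCast, hx, one_zpow]

open scoped commutatorElement in
/-- If the Sylow `p`-subgroup `S` of `N` is the centraliser of an element `z ≠ 1` whose only
conjugate in `S` is `z` itself, then `N` is not perfect. -/
theorem commutator_ne_top_of_isolated {N : Type*} [Group N] [Finite N] {p : ℕ} [Fact p.Prime]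
    (S : Sylow p N) {z : N} (hz : z ∈ S) (hz1 : z ≠ 1) (hC : ∀ x, x ∈ S ↔ x * z = z * x)
    (hiso : ∀ m, m * z * m⁻¹ ∈ S → m * z * m⁻¹ = z) : commutator N ≠ ⊤ := by
  intro htop
  have hfus : ∀ x ∈ S, ∀ g, g * x * g⁻¹ ∈ S → ∃ s ∈ S, g * x * g⁻¹ = s * x * s⁻¹ := by
    intro x hx g hgx
    let C := Subgroup.centralizer {x}
    have hzC : z ∈ C := Subgroup.mem_centralizer_singleton_iff.2 ((hC x).1 hx).symm
    have hzC' : g⁻¹ * z * g ∈ C := by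
      refine Subgroup.mem_centralizer_singleton_iff.2 ?_
      calc g⁻¹ * z * g * x = g⁻¹ * (z * (g * x * g⁻¹)) * g := by group
        _ = x * (g⁻¹ * z * g) := by rw [← (hC _).1 hgx]; group
    obtain ⟨k, hk⟩ := ((default : Sylow p C).2.map C.subtype).exists_conj_mem_sylow S
    have key : ∀ w : C, (∃ n : ℕ, (w : N) ^ p ^ n = 1) → ∃ a ∈ C, k * a * w * (k * a)⁻¹ ∈ S := by
      rintro w ⟨n, hn⟩
      obtain ⟨a, ha⟩ := (isPGroup_zpowers (x := w) (Subtype.ext hn)).exists_conj_mem_sylow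
        (default : Sylow p C)
      refine ⟨a, a.2, ?_⟩
      have := hk _ (Subgroup.mem_map_of_mem C.subtype (ha w (Subgroup.mem_zpowers w)))
      convert this using 1
      simp [mul_assoc]
    obtain ⟨n, hn⟩ := S.2 ⟨z, hz⟩
    have hn : z ^ p ^ n = 1 := congrArg Subtype.val hn
    obtain ⟨a, ha, ha'⟩ := key ⟨z, hzC⟩ ⟨n, hn⟩
    obtain ⟨b, hb, hb'⟩ := key ⟨g⁻¹ * z * g, hzC'⟩ ⟨n, by
      have := conj_pow (i := p ^ n) (a := g⁻¹) (b := z)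
      rw [inv_inv] at this
      rw [this, hn]; group⟩
    have h1 : k * a ∈ S := (hC _).2 (mul_inv_eq_iff_eq_mul.1 (hiso _ ha'))
    have h2 : k * b * g⁻¹ ∈ S := by
      refine (hC _).2 (mul_inv_eq_iff_eq_mul.1 (hiso _ ?_))
      convert hb' using 1
      group
    have hax : a * x = x * a := Subgroup.mem_centralizer_singleton_iff.1 ha
    have hbx : b * x = x * b := Subgroup.mem_centralizer_singleton_iff.1 hb
    refine ⟨(k * b * g⁻¹)⁻¹ * (k * a), S.mul_mem (S.inv_mem h2) h1, ?_⟩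
    calc g * x * g⁻¹ = g * b⁻¹ * (b * x) * g⁻¹ := by group
      _ = g * b⁻¹ * (x * a) * a⁻¹ * b * g⁻¹ := by rw [hbx]; group
      _ = _ := by rw [← hax]; group
  have hfoc : (S : Subgroup N).focalSubgroup ≤ ⁅(S : Subgroup N), (S : Subgroup N)⁆ := by
    rw [Subgroup.focalSubgroup_def, Subgroup.closure_le]
    rintro _ ⟨hg, x, hx, u, rfl⟩
    have h1 : u * x⁻¹ * u⁻¹ ∈ (S : Subgroup N) := by
      have := S.mul_mem (S.inv_mem hx) hg
      convert this using 1
      rw [commutatorElement_def]; group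
    obtain ⟨s, hs, hsx⟩ := hfus x⁻¹ (S.inv_mem hx) u h1
    have : ⁅x, u⁆ = ⁅x, s⁆ := by
      rw [commutatorElement_def, commutatorElement_def, mul_assoc, mul_assoc, ← mul_assoc u, hsx]
      group
    rw [this]
    exact Subgroup.commutator_mem_commutator hx hs
  have hS := Subgroup.commutator_inf_eq_focalSubgroup S
  rw [htop, top_inf_eq] at hS
  have : Group.IsNilpotent S := S.2.isNilpotent
  have : Nontrivial S := ⟨⟨⟨z, hz⟩, 1, fun h => hz1 (congrArg Subtype.val h)⟩⟩
  have hlt : ⁅(S : Subgroup N), (S : Subgroup N)⁆ < S := by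
    rw [← (S : Subgroup N).range_subtype, MonoidHom.range_eq_map, ← Subgroup.map_commutator,
      Subgroup.map_subtype_lt_map_subtype]
    exact Group.IsSolvable.commutator_lt_top_of_nontrivial S
  exact hlt.not_ge (hS.le.trans hfoc)

theorem isPGroup_two_of_pow_four {G : Type*} [Group G] {H : Subgroup G}
    (h4 : ∀ g ∈ H, g ^ 4 = 1) : IsPGroup 2 H :=
  fun g => ⟨2, Subtype.ext (h4 g g.2)⟩

theorem Subgroup.eq_bot_of_normal_of_le {G : Type*} [Group G] {H N : Subgroup G}
    (hcore : H.normalCore = ⊥) (hN : N.Normal) (hle : N ≤ H) : N = ⊥ := by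
  rw [eq_bot_iff, ← hcore]
  exact Subgroup.normal_le_normalCore.2 hle

theorem Subgroup.normal_of_isCoatom_le_normalizer {G : Type*} [Group G] {H N : Subgroup G}
    (hH : IsCoatom H) (hle : H ≤ Subgroup.normalizer (N : Set G)) (hN : ¬ N ≤ H) : N.Normal := by
  rw [← Subgroup.normalizer_eq_top_iff]
  refine (hH.le_iff.1 hle).resolve_right fun h => hN ?_
  rw [← h]
  exact Subgroup.le_normalizer

/-- A core-free non-trivial maximal `p`-subgroup is a Sylow subgroup. -/
theorem exists_sylow_eq {G : Type*} [Group G] [Finite G] {p : ℕ} [Fact p.Prime] {H : Subgroup G}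
    (hH : IsCoatom H) (hne : H ≠ ⊥) (hcore : H.normalCore = ⊥) (hp : IsPGroup p H) :
    ∃ S : Sylow p G, (S : Subgroup G) = H := by
  obtain ⟨S, hS⟩ := hp.exists_le_sylow
  refine ⟨S, (hH.le_iff.1 hS).resolve_left fun h => hne ?_⟩
  have hG : IsPGroup p G := by
    have := S.2
    rw [h] at this
    exact this.of_equiv Subgroup.topEquiv
  have : Group.IsNilpotent G := hG.isNilpotent
  exact Subgroup.eq_bot_of_normal_of_le hcore
    (Subgroup.NormalizerCondition.normal_of_coatom H Group.normalizerCondition_of_isNilpotent hH)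
    le_rfl

/-- If a core-free maximal `2`-subgroup `H` is given and there is a non-trivial normal subgroup
of odd order, then there is even an abelian one. -/
theorem exists_abelian_of_odd_normal {G : Type*} [Group G] [Finite G] {H M : Subgroup G}
    (hH : IsCoatom H) (h4 : ∀ g ∈ H, g ^ 4 = 1) [M.Normal] (hM : M ≠ ⊥) (hodd : Odd (Nat.card M)) :
    ∃ E : Subgroup G, E.Normal ∧ E ≠ ⊥ ∧ (∀ a ∈ E, ∀ b ∈ E, a * b = b * a) ∧
      Odd (Nat.card E) := by
  obtain ⟨p, hp, hpM⟩ := Nat.exists_prime_and_dvd (fun h => hM (Subgroup.card_eq_one.1 h))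
  have : Fact p.Prime := ⟨hp⟩
  let φ : H →* MulAut M := MulAut.conjNormal.comp H.subtype
  let _ : MulAction H (Sylow p M) := MulAction.compHom _ φ
  have hcard : ¬ 2 ∣ Nat.card (Sylow p M) := fun h =>
    (Nat.not_even_iff_odd.2 hodd) (even_iff_two_dvd.2 ((h.trans
      ((default : Sylow p M).card_dvd_index)).trans (Subgroup.index_dvd_card _)))
  obtain ⟨P, hP⟩ :=
    (isPGroup_two_of_pow_four h4).nonempty_fixed_point_of_prime_not_dvd_card (Sylow p M) hcard
  have hconj : ∀ h ∈ H, ∀ x ∈ (P : Subgroup M).map M.subtype,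
      h * x * h⁻¹ ∈ (P : Subgroup M).map M.subtype := by
    rintro h hh _ ⟨x, hx, rfl⟩
    refine ⟨MulAut.conjNormal h x, ?_, rfl⟩
    have h1 : φ ⟨h, hh⟩ • P = P := hP ⟨h, hh⟩
    have h2 : φ ⟨h, hh⟩ • x ∈ ((φ ⟨h, hh⟩ • P : Sylow p M) : Subgroup M) :=
      Subgroup.smul_mem_pointwise_smul x _ _ hx
    rw [h1] at h2
    exact h2
  set P₀ := (P : Subgroup M).map M.subtype with hP₀
  have hPM : P₀ ≤ M := Subgroup.map_subtype_le _
  have hoddP : Odd (Nat.card P₀) := hodd.of_dvd_nat (Subgroup.card_dvd_of_le hPM)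
  have hPbot : P₀ ≠ ⊥ := by
    intro h
    rw [hP₀, Subgroup.map_eq_bot_iff_of_injective _ M.subtype_injective] at h
    exact P.ne_bot_of_dvd_card hpM h
  have hnorm : P₀.Normal := by
    refine Subgroup.normal_of_isCoatom_le_normalizer hH (fun h hh => ?_) fun hle => hPbot ?_
    · rw [Subgroup.mem_normalizer_iff]
      refine fun x => ⟨hconj h hh x, fun hx => ?_⟩
      simpa [mul_assoc] using hconj h⁻¹ (H.inv_mem hh) _ hx
    · rw [Subgroup.eq_bot_iff_forall]
      exact fun x hx => Subgroup.eq_one_of_pow_four hoddP hx (h4 x (hle hx))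
  have hpP : IsPGroup p P₀ := P.2.map _
  have : Nontrivial P₀ := (Subgroup.nontrivial_iff_ne_bot _).2 hPbot
  have hcen := hpP.center_nontrivial
  refine ⟨(Subgroup.center P₀).map P₀.subtype, inferInstance, ?_, ?_, ?_⟩
  · rw [Ne, Subgroup.map_eq_bot_iff_of_injective _ P₀.subtype_injective]
    exact (Subgroup.nontrivial_iff_ne_bot _).1 hcen
  · rintro _ ⟨a, ha, rfl⟩ _ ⟨b, hb, rfl⟩
    exact congrArg Subtype.val (Subgroup.mem_center_iff.1 hb a)
  · exact hoddP.of_dvd_nat (Subgroup.card_dvd_of_le (Subgroup.map_subtype_le _))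

theorem exists_minimal_normal {G : Type*} [Group G] [Finite G] [Nontrivial G] :
    ∃ M : Subgroup G, M.Normal ∧ M ≠ ⊥ ∧ ∀ N : Subgroup G, N.Normal → N ≤ M → N ≠ ⊥ → N = M := by
  obtain ⟨M, hM⟩ := (Set.toFinite {M : Subgroup G | M.Normal ∧ M ≠ ⊥}).exists_minimal
    ⟨⊤, inferInstance, top_ne_bot⟩
  exact ⟨M, hM.1.1, hM.1.2, fun N hN hle hne => le_antisymm hle (hM.2 ⟨hN, hne⟩ hle)⟩

/-- A normal subgroup of a finite `p`-group whose order is divisible by `p` meets the centre. -/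
theorem IsPGroup.exists_mem_normal_central {P : Type*} [Group P] [Finite P] {p : ℕ}
    [Fact p.Prime] (hP : IsPGroup p P) (K : Subgroup P) [K.Normal] (hK : p ∣ Nat.card K) :
    ∃ z ∈ K, z ≠ 1 ∧ ∀ x, x * z = z * x := by
  let _ : MulAction P K := MulAction.compHom _ (MulAut.conjNormal : P →* MulAut K)
  have h1 : (1 : K) ∈ MulAction.fixedPoints P K := fun x =>
    map_one (MulAut.conjNormal x : MulAut K)
  obtain ⟨z, hz, hz1⟩ := hP.exists_fixed_point_of_prime_dvd_card_of_fixed_point K hK h1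
  refine ⟨z, z.2, fun h => hz1 (Subtype.ext h.symm), fun x => ?_⟩
  have h2 : (MulAut.conjNormal x : MulAut K) z = z := hz x
  have h3 := congrArg Subtype.val h2
  rw [MulAut.conjNormal_apply] at h3
  exact mul_inv_eq_iff_eq_mul.1 h3

/-- If `H` is a core-free maximal subgroup which is a Sylow `2`-subgroup of exponent dividing four
and there are no non-trivial normal subgroups of odd order, then some central involution of `H`
has another conjugate in `H`. -/
theorem exists_central_involution {G : Type*} [Group G] [Finite G] (S : Sylow 2 G)
    (hH : IsCoatom (S : Subgroup G)) (hne : (S : Subgroup G) ≠ ⊥)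
    (hcore : (S : Subgroup G).normalCore = ⊥) (h4 : ∀ g ∈ S, g ^ 4 = 1)
    (hno : ∀ M : Subgroup G, M.Normal → Odd (Nat.card M) → M = ⊥) :
    ∃ z ∈ S, z ≠ 1 ∧ z * z = 1 ∧ (∀ x, x ∈ S ↔ x * z = z * x) ∧
      ∃ m, m * z * m⁻¹ ∈ S ∧ m * z * m⁻¹ ≠ z := by
  have : Nontrivial G := by
    by_contra h
    rw [not_nontrivial_iff_subsingleton] at h
    exact hne (Subsingleton.elim _ _)
  obtain ⟨M, hMn, hM1, hmin⟩ := exists_minimal_normal (G := G)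
  have hev : 2 ∣ Nat.card M := by
    by_contra h
    exact hM1 (hno M hMn (Nat.odd_iff.2 (by omega)))
  obtain ⟨z, hzS, hzM, hz1, hz2, hzc⟩ : ∃ z ∈ S, z ∈ M ∧ z ≠ 1 ∧ z * z = 1 ∧
      ∀ x ∈ S, x * z = z * x := by
    obtain ⟨x, hx⟩ := exists_prime_orderOf_dvd_card' 2 hev
    have hx2 : (x : G) ^ 2 ^ 1 = 1 := by
      rw [pow_one, ← hx, ← Subgroup.coe_pow, pow_orderOf_eq_one, Subgroup.coe_one]
    obtain ⟨g, hg⟩ := (isPGroup_zpowers hx2).exists_conj_mem_sylow S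
    have hgx := hg x (Subgroup.mem_zpowers _)
    let y : S := ⟨g * x * g⁻¹, hgx⟩
    have hyK : y ∈ M.subgroupOf S := hMn.conj_mem x x.2 g
    have hy : orderOf y = 2 := by
      rw [orderOf_eq_prime_iff]
      constructor
      · apply Subtype.ext
        change (g * x * g⁻¹) ^ 2 = 1
        rw [conj_pow, show (x : G) ^ 2 = 1 from hx2]; group
      · intro h
        have h' : g * x * g⁻¹ = 1 := congrArg Subtype.val h
        rw [mul_inv_eq_one, mul_eq_left] at h'
        have : orderOf x = 1 := by rw [orderOf_eq_one_iff]; exact Subtype.ext h'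
        omega
    obtain ⟨z, hzK, hz1, hzc⟩ := S.2.exists_mem_normal_central (M.subgroupOf S)
      (by have := Subgroup.orderOf_dvd_natCard _ hyK; rwa [hy] at this)
    have hc : ∀ x ∈ S, x * z = z * x := fun x hx => congrArg Subtype.val (hzc ⟨x, hx⟩)
    by_cases hzz : (z : G) * z = 1
    · exact ⟨z, z.2, hzK, fun h => hz1 (Subtype.ext h), hzz, hc⟩
    · refine ⟨z * z, S.mul_mem z.2 z.2, M.mul_mem hzK hzK, hzz, ?_, fun x hx => ?_⟩
      · rw [← h4 z z.2]
        simp only [pow_succ, pow_zero, one_mul, mul_assoc]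
      · have : Commute x z := hc x hx
        exact (this.mul_right this).eq
  have hC : ∀ x, x ∈ S ↔ x * z = z * x := by
    have hle : (S : Subgroup G) ≤ Subgroup.centralizer {z} := fun x hx =>
      Subgroup.mem_centralizer_singleton_iff.2 (hzc x hx)
    rcases hH.le_iff.1 hle with htop | heq
    · exfalso
      refine hz1 (Subgroup.mem_bot.1 (hcore ▸ fun y => ?_))
      have hy : y ∈ Subgroup.centralizer {z} := htop ▸ Subgroup.mem_top y
      rw [Subgroup.mem_centralizer_singleton_iff.1 hy, mul_inv_cancel_right]
      exact hzS
    · intro x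
      rw [← Subgroup.mem_centralizer_singleton_iff, heq]
      rfl
  refine ⟨z, hzS, hz1, hz2, hC, ?_⟩
  by_contra! hiso
  have hperf : commutator M = ⊤ := by
    have h1 : ⁅M, M⁆ = M := by
      refine hmin _ inferInstance (Subgroup.commutator_le_self M) fun h => hM1 ?_
      refine Subgroup.eq_bot_of_normal_of_le hcore hMn fun x hx => (hC x).2 ?_
      rw [Subgroup.commutator_eq_bot_iff_le_centralizer] at h
      exact (Subgroup.mem_centralizer_iff.1 (h hx) z hzM).symm
    rw [← Subgroup.map_injective M.subtype_injective |>.eq_iff, commutator_def,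
      Subgroup.map_commutator, ← MonoidHom.range_eq_map, Subgroup.range_subtype, h1]
  obtain ⟨g, hg⟩ := ((default : Sylow 2 M).2.map M.subtype).exists_conj_mem_sylow S
  let T : Sylow 2 M := (MulAut.conjNormal g : MulAut M) • (default : Sylow 2 M)
  have hT : (S : Subgroup G).subgroupOf M = T := by
    refine T.3 (S.2.comap_subtype) ?_
    rintro _ ⟨x, hx, rfl⟩
    exact hg x (Subgroup.mem_map_of_mem _ hx)
  have hmem : ∀ x : M, x ∈ T ↔ (x : G) ∈ S := fun x => by
    change x ∈ (T : Subgroup M) ↔ _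
    rw [← hT]; rfl
  refine commutator_ne_top_of_isolated T (z := ⟨z, hzM⟩) ((hmem _).2 hzS)
    (fun h => hz1 (congrArg Subtype.val h)) (fun x => ?_) (fun m hm => ?_) hperf
  · rw [hmem, hC, Subtype.ext_iff]; rfl
  · rw [hmem] at hm
    exact Subtype.ext (hiso m hm)

/-- Normalisers grow in finite `p`-groups. -/
theorem IsPGroup.exists_mem_normalizer {G : Type*} [Group G] [Finite G] {p : ℕ} [Fact p.Prime]
    {P D : Subgroup G} (hP : IsPGroup p P) (hD : D < P) :
    ∃ g ∈ P, g ∉ D ∧ g ∈ Subgroup.normalizer (D : Set G) := by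
  have : Group.IsNilpotent P := hP.isNilpotent
  have hlt : D.subgroupOf P < ⊤ := by
    rw [lt_top_iff_ne_top, Ne, Subgroup.subgroupOf_eq_top]
    exact hD.not_ge
  obtain ⟨x, hx, hxD⟩ := SetLike.exists_of_lt (Group.normalizerCondition_of_isNilpotent _ hlt)
  refine ⟨x, x.2, hxD, Subgroup.mem_normalizer_fintype fun n hn => ?_⟩
  exact (Subgroup.mem_normalizer_iff.1 hx ⟨n, hD.le hn⟩).1 hn

/-- If an element lies in two distinct Sylow `p`-subgroups, then it lies in a `p`-subgroup whose
normaliser is not a `p`-group. -/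
theorem Sylow.exists_normalizer_not_isPGroup {G : Type*} [Group G] [Finite G] {p : ℕ}
    [Fact p.Prime] {S₁ S₂ : Sylow p G} (hne : S₁ ≠ S₂) {c : G} (h₁ : c ∈ S₁) (h₂ : c ∈ S₂) :
    ∃ D : Subgroup G, c ∈ D ∧ IsPGroup p D ∧
      ¬ IsPGroup p (Subgroup.normalizer (D : Set G)) := by
  obtain ⟨⟨T₁, T₂⟩, ⟨hT, hc₁, hc₂⟩, hmax⟩ := Set.exists_max_image
    {T : Sylow p G × Sylow p G | T.1 ≠ T.2 ∧ c ∈ T.1 ∧ c ∈ T.2}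
    (fun T => Nat.card (T.1 ⊓ T.2 : Subgroup G)) (Set.toFinite _) ⟨(S₁, S₂), hne, h₁, h₂⟩
  refine ⟨T₁ ⊓ T₂, ⟨hc₁, hc₂⟩, T₁.2.to_le inf_le_left, fun hN => hT ?_⟩
  obtain ⟨L, hL⟩ := hN.exists_le_sylow
  have hDL : (T₁ ⊓ T₂ : Subgroup G) ≤ L := Subgroup.le_normalizer.trans hL
  have key : ∀ T : Sylow p G, (T₁ ⊓ T₂ : Subgroup G) < T → T = L := by
    intro T hlt
    by_contra hTL
    obtain ⟨g, hgT, hgD, hgN⟩ := T.2.exists_mem_normalizer hlt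
    refine hgD ?_
    rw [Subgroup.eq_of_le_of_card_ge (le_inf hlt.le hDL)
      (hmax (T, L) ⟨hTL, hlt.le ⟨hc₁, hc₂⟩, hDL ⟨hc₁, hc₂⟩⟩)]
    exact ⟨hgT, hL hgN⟩
  rw [key T₁, key T₂]
  · refine lt_of_le_of_ne inf_le_right fun h => hT ?_
    exact (Sylow.ext (T₂.3 T₁.2 (inf_eq_right.1 h)))
  · refine lt_of_le_of_ne inf_le_left fun h => hT ?_
    exact (Sylow.ext (T₁.3 T₂.2 (inf_eq_left.1 h))).symm

/-- The elementary abelian subgroup `Ω₁(Z(R))`, for `R` a normal subgroup. -/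
theorem exists_omega_center {X : Type*} [Group X] (R : Subgroup X) [R.Normal] :
    ∃ V : Subgroup X, V.Normal ∧
      ∀ v, v ∈ V ↔ v ∈ R ∧ (∀ r ∈ R, r * v = v * r) ∧ v * v = 1 := by
  let V : Subgroup X :=
    { carrier := {v | v ∈ R ∧ (∀ r ∈ R, r * v = v * r) ∧ v * v = 1}
      one_mem' := ⟨R.one_mem, fun r _ => by simp, by simp⟩
      mul_mem' := by
        rintro v w ⟨hv, hvc, hv2⟩ ⟨hw, hwc, hw2⟩
        refine ⟨R.mul_mem hv hw, fun r hr => ?_, ?_⟩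
        · exact ((show Commute r v from hvc r hr).mul_right (hwc r hr)).eq
        · rw [mul_assoc, ← mul_assoc w, hvc w hw, mul_assoc v, hw2, mul_one, hv2]
      inv_mem' := by
        rintro v ⟨hv, hvc, hv2⟩
        refine ⟨R.inv_mem hv, fun r hr => ?_, ?_⟩
        · exact (show Commute r v from hvc r hr).inv_right.eq
        · rw [← mul_inv_rev, hv2, inv_one] }
  refine ⟨V, ⟨?_⟩, fun v => Iff.rfl⟩
  rintro v ⟨hv, hvc, hv2⟩ g
  refine ⟨Subgroup.Normal.conj_mem inferInstance v hv g, fun r hr => ?_, ?_⟩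
  · have h := hvc _ (Subgroup.Normal.conj_mem inferInstance r hr g⁻¹)
    calc r * (g * v * g⁻¹) = g * (g⁻¹ * r * g⁻¹⁻¹ * v) * g⁻¹ := by group
      _ = g * v * g⁻¹ * r := by rw [h]; group
  · calc g * v * g⁻¹ * (g * v * g⁻¹) = g * (v * v) * g⁻¹ := by group
      _ = 1 := by rw [hv2]; group

/-- The local analysis of a group `X` with a maximal subgroup `Q` which is the centraliser of an
involution `z` and contains the centraliser of one of its normal subgroups. -/
theorem exists_elementary_normal {X : Type*} [Group X] {Q P : Subgroup X} (hQ : IsCoatom Q)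
    (hQ4 : ∀ g ∈ Q, g ^ 4 = 1) {z : X} (hz2 : z * z = 1) (hz : ∀ x, x ∈ Q ↔ x * z = z * x)
    [P.Normal] (hPQ : P ≤ Q) (hCP : Subgroup.centralizer (P : Set X) ≤ Q)
    (hE : ∃ E : Subgroup (X ⧸ Q.normalCore), E.Normal ∧ E ≠ ⊥ ∧
      (∀ a ∈ E, ∀ b ∈ E, a * b = b * a) ∧ Odd (Nat.card E)) :
    ∃ V : Subgroup X, V.Normal ∧ V ≤ Q.normalCore ∧ (∀ v ∈ V, v * v = 1) ∧ z ∈ V ∧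
      (∀ x, x ∈ Q.normalCore ↔ ∀ v ∈ V, x * v = v * x) ∧
      ∀ s ∈ Q, ∀ t ∈ Q, s ∉ Q.normalCore → t ∉ Q.normalCore → s * t ∈ Q.normalCore := by
  obtain ⟨V, hVn, hV⟩ := exists_omega_center Q.normalCore
  have hzR : z ∈ Q.normalCore := by
    have hle : Subgroup.centralizer (Q.normalCore : Set X) ≤ Q.normalCore := by
      refine Subgroup.normal_le_normalCore.2 ((Subgroup.centralizer_le ?_).trans hCP)
      exact Subgroup.normal_le_normalCore.2 hPQ
    refine hle (Subgroup.mem_centralizer_iff.2 fun q hq => ?_)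
    exact (hz q).1 (Subgroup.normalCore_le Q hq)
  have hzV : z ∈ V := (hV z).2 ⟨hzR, fun r hr => (hz r).1 (Subgroup.normalCore_le Q hr), hz2⟩
  have hVR : V ≤ Q.normalCore := fun v hv => ((hV v).1 hv).1
  have hC : ∀ x, x ∈ Q.normalCore ↔ ∀ v ∈ V, x * v = v * x := by
    refine fun x => ⟨fun hx v hv => ((hV v).1 hv).2.1 x hx, fun hx => ?_⟩
    have hle : Subgroup.centralizer (V : Set X) ≤ Q.normalCore :=
      Subgroup.normal_le_normalCore.2 fun y hy =>
        (hz y).2 (Subgroup.mem_centralizer_iff.1 hy z hzV).symm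
    exact hle (Subgroup.mem_centralizer_iff.2 fun v hv => (hx v hv).symm)
  have hV2 : ∀ v ∈ V, v * v = 1 := fun v hv => ((hV v).1 hv).2.2
  exact ⟨V, hVn, hVR, hV2, hzV, hC, fun s hs t ht hsR htR => mul_mem_normalCore hQ hQ4
    (hVR.trans (Subgroup.normalCore_le Q)) (fun v hv w hw => (hC v).1 (hVR hv) w hw) hV2 hC hE
    hs ht hsR htR⟩

theorem isCoatom_subgroupOf_of_covBy {G : Type*} [Group G] {X Q : Subgroup G} (hQX : Q ⋖ X) :
    IsCoatom (Q.subgroupOf X) := by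
  refine ⟨fun h => hQX.lt.not_ge (Subgroup.subgroupOf_eq_top.1 h), fun B hB => ?_⟩
  have hQ : (Q.subgroupOf X).map X.subtype = Q := Subgroup.map_subgroupOf_eq_of_le hQX.le
  have hlt : Q < B.map X.subtype := by
    rw [← hQ]
    exact (Subgroup.map_lt_map_iff_of_injective X.subtype_injective).2 hB
  have heq : B.map X.subtype = X := by
    by_contra hne
    exact hQX.2 hlt (lt_of_le_of_ne (Subgroup.map_subtype_le B) hne)
  rw [← Subgroup.map_injective X.subtype_injective |>.eq_iff, heq, ← MonoidHom.range_eq_map,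
    Subgroup.range_subtype]

/-- Transfer of the data of a pushing-up configuration from the subgroup `X` to `G`. -/
theorem isPushingUpConfiguration_map {G : Type*} [Group G] [Finite G] {X Q : Subgroup G}
    {V : Subgroup X} {h z : G} (h8 : ∀ x : G, x ^ 8 = 1 → x ^ 4 = 1) (h4 : ∀ q ∈ Q, q ^ 4 = 1)
    (hQX : Q ⋖ X) (hnorm : ¬ (Q.subgroupOf X).Normal) (hVn : V.Normal)
    (hVR : V ≤ (Q.subgroupOf X).normalCore) (hV2 : ∀ v ∈ V, v * v = 1) (hzX' : z ∈ X)
    (hzV : ⟨z, hzX'⟩ ∈ V) (hzX : ∀ x ∈ X, x ∈ Q ↔ x * z = z * x)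
    (hC : ∀ x, x ∈ (Q.subgroupOf X).normalCore ↔ ∀ v ∈ V, x * v = v * x)
    (hmul : ∀ s ∈ Q.subgroupOf X, ∀ t ∈ Q.subgroupOf X, s ∉ (Q.subgroupOf X).normalCore →
      t ∉ (Q.subgroupOf X).normalCore → s * t ∈ (Q.subgroupOf X).normalCore)
    (hhN : h ∈ Subgroup.normalizer (Q : Set G)) (hh2 : h ^ 2 ∈ Q) :
    IsPushingUpConfiguration X Q ((Q.subgroupOf X).normalCore.map X.subtype)
      (V.map X.subtype) h z := by
  have hlift : ∀ (K : Subgroup X) (x : X), (x : G) ∈ K.map X.subtype ↔ x ∈ K := fun K x =>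
    Subgroup.mem_map_iff_mem X.subtype_injective
  let R := (Q.subgroupOf X).normalCore
  have hcoatom := isCoatom_subgroupOf_of_covBy hQX
  have hRQ : R.map X.subtype ≤ Q := by
    rintro _ ⟨r, hr, rfl⟩
    exact Subgroup.normalCore_le (Q.subgroupOf X) hr
  exact
    { pow_four := h8
      pow_four_of_mem := fun q hq => h4 q hq
      covBy := hQX
      le := hRQ
      conj_mem := by
        rintro x hx _ ⟨r, hr, rfl⟩
        exact (hlift R (⟨x, hx⟩ * r * ⟨x, hx⟩⁻¹)).2 (Subgroup.Normal.conj_mem inferInstance r hr _)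
      mul_mem := fun s hs t ht hsR htR =>
        (hlift R (⟨s, hQX.le hs⟩ * ⟨t, hQX.le ht⟩)).2 (hmul _ hs _ ht
          (fun h' => hsR ((hlift R _).2 h')) (fun h' => htR ((hlift R _).2 h')))
      self_normalizing := by
        intro x hx hxQ
        have hmem : (⟨x, hx⟩ : X)⁻¹ ∈ Subgroup.normalizer (Q.subgroupOf X : Set X) :=
          Subgroup.mem_normalizer_fintype fun n hn => by
            have := hxQ n hn
            change x⁻¹ * n * x⁻¹⁻¹ ∈ Q
            rwa [inv_inv]
        rcases hcoatom.le_iff.1 Subgroup.le_normalizer with h' | h'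
        · exact (hnorm (Subgroup.normalizer_eq_top_iff.1 h')).elim
        · rw [h', inv_mem_iff] at hmem
          exact hmem
      V_le := Subgroup.map_mono hVR
      V_conj_mem := by
        rintro x hx _ ⟨v, hv, rfl⟩
        exact (hlift V (⟨x, hx⟩ * v * ⟨x, hx⟩⁻¹)).2 (hVn.conj_mem v hv _)
      V_mul_self := by
        rintro _ ⟨v, hv, rfl⟩
        exact congrArg Subtype.val (hV2 v hv)
      V_comm := by
        rintro _ ⟨r, hr, rfl⟩ _ ⟨v, hv, rfl⟩
        exact congrArg Subtype.val ((hC r).1 hr v hv)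
      mem_of_V_comm := fun x hx hxV => (hlift R ⟨x, hx⟩).2 ((hC _).2 fun v hv =>
        Subtype.ext (hxV v ((hlift V v).2 hv)))
      z_mem := (hlift V _).2 hzV
      z_comm := fun q hq => (hzX q (hQX.le hq)).1 hq
      mem_of_z_comm := fun x hx hxz => (hzX x hx).2 hxz
      h_conj_mem := fun q hq => (Subgroup.mem_normalizer_iff.1 hhN q).1 hq
      h_conj_mem' := fun q hq => (Subgroup.mem_normalizer_iff''.1 hhN q).1 hq
      h_sq := hh2 }

/-- A `2`-subgroup which contains an element with a `2`-group as centraliser, but whose normaliser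
is not a `2`-group. -/
def HasLargeNormalizer {G : Type*} [Group G] (P : Subgroup G) : Prop :=
  IsPGroup 2 P ∧ (∃ c ∈ P, IsPGroup 2 (Subgroup.centralizer {c})) ∧
    ¬ IsPGroup 2 (Subgroup.normalizer (P : Set G))

/-- Suppose that no non-trivial `2`-subgroup of `G` is normal, and that every Sylow `2`-subgroup is
maximal, of exponent dividing four, and the centraliser of an element of order at most two. If the
quotients of proper subgroups by cores of maximal subgroups of exponent dividing four have
non-trivial abelian normal subgroups of odd order, then no `2`-subgroup has a large normaliser. -/
theorem not_hasLargeNormalizer {G : Type*} [Group G] [Finite G]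
    (hmax : ∀ S : Sylow 2 G, IsCoatom (S : Subgroup G))
    (hcore : ∀ P : Subgroup G, P.Normal → IsPGroup 2 P → P = ⊥)
    (hz : ∀ S : Sylow 2 G, ∃ z, z * z = 1 ∧ ∀ x, x ∈ S ↔ x * z = z * x)
    (h4 : ∀ S : Sylow 2 G, ∀ g ∈ S, g ^ 4 = 1) (h8 : ∀ x : G, x ^ 8 = 1 → x ^ 4 = 1)
    (ih : ∀ (X : Subgroup G) (Q : Subgroup X), X ≠ ⊤ → IsCoatom Q → ¬ Q.Normal →
      (∀ g ∈ Q, g ^ 4 = 1) → ∃ E : Subgroup (X ⧸ Q.normalCore), E.Normal ∧ E ≠ ⊥ ∧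
        (∀ a ∈ E, ∀ b ∈ E, a * b = b * a) ∧ Odd (Nat.card E))
    (P₀ : Subgroup G) : ¬ HasLargeNormalizer P₀ := by
  intro hP₀
  obtain ⟨⟨P, Q⟩, ⟨hP, hQ, hQP⟩, hcard⟩ := Set.exists_max_image
    {T : Subgroup G × Subgroup G | HasLargeNormalizer T.1 ∧ IsPGroup 2 T.2 ∧
      T.2 ≤ Subgroup.normalizer (T.1 : Set G)}
    (fun T => Nat.card T.2) (Set.toFinite _) ⟨(P₀, P₀), hP₀, hP₀.1, Subgroup.le_normalizer⟩
  have hmaxQ : ∀ W Q' : Subgroup G, HasLargeNormalizer W → IsPGroup 2 Q' → Q ≤ Q' →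
      Q' ≤ Subgroup.normalizer (W : Set G) → Q' ≤ Q := fun W Q' hW hQ' hle hN =>
    (Subgroup.eq_of_le_of_card_ge hle (hcard (W, Q') ⟨hW, hQ', hN⟩)).ge
  dsimp only at hP hQ hQP
  obtain ⟨hP2, ⟨c, hcP, hc⟩, hPN⟩ := id hP
  obtain ⟨S, hQS⟩ := hQ.exists_le_sylow
  obtain ⟨z, hz2, hzS⟩ := hz S
  have hPQ : P ≤ Q := le_sup_left.trans
    (hmaxQ P (P ⊔ Q) hP (hP2.to_sup_of_normal_left' hQ hQP) le_sup_right
      (sup_le Subgroup.le_normalizer hQP))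
  have hSN : ∀ x ∈ S, x ∈ Subgroup.normalizer (P : Set G) → x ∈ Q := fun x hxS hxN =>
    hmaxQ P (S ⊓ Subgroup.normalizer (P : Set G)) hP (S.2.to_le inf_le_left) (le_inf hQS hQP)
      inf_le_right ⟨hxS, hxN⟩
  have hzQ : z ∈ Q := by
    refine hSN z ((hzS z).2 rfl) (Subgroup.mem_normalizer_fintype fun n hn => ?_)
    rwa [← (hzS n).1 (hQS (hPQ hn)), mul_inv_cancel_right]
  have hNtop : Subgroup.normalizer (P : Set G) ≠ ⊤ := fun h => by
    have hbot := hcore P (Subgroup.normalizer_eq_top_iff.1 h) hP2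
    rw [hbot, Subgroup.mem_bot] at hcP
    refine hPN (hc.to_le fun x _ => ?_)
    rw [Subgroup.mem_centralizer_singleton_iff, hcP, mul_one, one_mul]
  have hQlt : Q < S := by
    refine lt_of_le_of_ne hQS fun h => ?_
    rcases (hmax S).le_iff.1 (h ▸ hQP) with h' | h'
    · exact hNtop h'
    · exact hPN (h' ▸ S.2)
  obtain ⟨h, hhS, hhQ, hhN, hh2⟩ : ∃ h ∈ S, h ∉ Q ∧ h ∈ Subgroup.normalizer (Q : Set G) ∧
      h ^ 2 ∈ Q := by
    obtain ⟨h, hhS, hhQ, hhN⟩ := S.2.exists_mem_normalizer hQlt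
    by_cases hh2 : h ^ 2 ∈ Q
    · exact ⟨h, hhS, hhQ, hhN, hh2⟩
    · refine ⟨h ^ 2, pow_mem hhS 2, hh2, pow_mem hhN 2, ?_⟩
      rw [← pow_mul, h4 S h hhS]
      exact Q.one_mem
  have hQN : Q < Subgroup.normalizer (P : Set G) :=
    lt_of_le_of_ne hQP fun h => hPN (h ▸ hQ)
  obtain ⟨X, hQX, hXN⟩ := exists_covBy_le_of_lt hQN
  have hXtop : X ≠ ⊤ := fun h => hNtop (top_le_iff.1 (h ▸ hXN))
  have hX2 : ¬ IsPGroup 2 X := fun h => hQX.lt.not_ge (hmaxQ P X hP h hQX.le hXN)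
  have hstar : ∀ W : Subgroup G, z ∈ W → W ≤ Q → (∀ x ∈ X, ∀ w ∈ W, x * w * x⁻¹ ∈ W) →
      ¬ ∀ w ∈ W, h * w * h⁻¹ ∈ W := by
    intro W hzW hWQ hXW hhW
    have hXW' : X ≤ Subgroup.normalizer (W : Set G) := fun x hx =>
      Subgroup.mem_normalizer_fintype (hXW x hx)
    have hW : HasLargeNormalizer W := by
      refine ⟨hQ.to_le hWQ, ⟨z, hzW, S.2.to_le fun x hx => ?_⟩, fun hN => hX2 (hN.to_le hXW')⟩
      exact (hzS x).2 (Subgroup.mem_centralizer_singleton_iff.1 hx)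
    refine hhQ (hmaxQ W (Q ⊔ Subgroup.zpowers h) hW (S.2.to_le ?_) le_sup_left ?_
      (le_sup_right (a := Q) (Subgroup.mem_zpowers h)))
    · exact sup_le hQS ((Subgroup.zpowers_le).2 hhS)
    · exact sup_le (hQX.le.trans hXW') ((Subgroup.zpowers_le).2
        (Subgroup.mem_normalizer_fintype hhW))
  have hhconj : ∀ q ∈ Q, h * q * h⁻¹ ∈ Q := fun q hq =>
    (Subgroup.mem_normalizer_iff.1 hhN q).1 hq
  have hzX : ∀ x ∈ X, x ∈ Q ↔ x * z = z * x := fun x hx =>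
    ⟨fun hxQ => (hzS x).1 (hQS hxQ), fun hxz => hSN x ((hzS x).2 hxz) (hXN hx)⟩
  have hcoatom : IsCoatom (Q.subgroupOf X) := isCoatom_subgroupOf_of_covBy hQX
  have hnorm : ¬ (Q.subgroupOf X).Normal := fun hn =>
    hstar Q hzQ le_rfl (fun x hx q hq => hn.conj_mem ⟨q, hQX.le hq⟩ hq ⟨x, hx⟩) hhconj
  have hQ4 : ∀ g ∈ Q.subgroupOf X, g ^ 4 = 1 := fun g hg => Subtype.ext (h4 S g (hQS hg))
  have hPn : (P.subgroupOf X).Normal := ⟨fun p hp x =>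
    (Subgroup.mem_normalizer_iff.1 (hXN x.2) p).1 hp⟩
  have hCP : Subgroup.centralizer (P.subgroupOf X : Set X) ≤ Q.subgroupOf X := by
    have h2 : IsPGroup 2 (Subgroup.centralizer (P.subgroupOf X : Set X)) := by
      intro x
      have hx : (x : G) ∈ Subgroup.centralizer {c} := Subgroup.mem_centralizer_singleton_iff.2
        (congrArg Subtype.val (Subgroup.mem_centralizer_iff.1 x.2
          ⟨c, hQX.le (hPQ hcP)⟩ hcP)).symm
      obtain ⟨k, hk⟩ := hc ⟨x, hx⟩
      have hk' : (x : G) ^ 2 ^ k = 1 := congrArg Subtype.val hk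
      exact ⟨k, Subtype.ext (Subtype.ext hk')⟩
    have h3 := (hQ.of_equiv (Subgroup.subgroupOfEquivOfLe hQX.le).symm).to_sup_of_normal_right h2
    intro x hx
    refine hmaxQ P _ hP (h3.map X.subtype) (fun q hq => ?_) ?_
      (Subgroup.mem_map_of_mem _ (le_sup_right (a := Q.subgroupOf X) hx))
    · exact ⟨⟨q, hQX.le hq⟩, le_sup_left (a := Q.subgroupOf X) hq, rfl⟩
    · exact (Subgroup.map_subtype_le _).trans hXN
  obtain ⟨V, hVn, hVR, hV2, hzV, hC, hmul⟩ := exists_elementary_normal (P := P.subgroupOf X)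
    (z := ⟨z, hQX.le hzQ⟩) hcoatom hQ4 (Subtype.ext hz2)
    (fun x => (hzX x x.2).trans (by rw [Subtype.ext_iff]; rfl))
    (fun x hx => hPQ hx) hCP (ih X _ hXtop hcoatom hnorm hQ4)
  have hconf := isPushingUpConfiguration_map h8 (fun q hq => h4 S q (hQS hq)) hQX hnorm hVn hVR hV2
    (hQX.le hzQ) hzV hzX hC hmul hhN hh2
  obtain ⟨W, hzW, hWQ, hWX, hWh⟩ := hconf.exists_normalized
  exact hstar W hzW hWQ hWX hWh

open scoped Pointwise in
/-- A finite group with a non-trivial core-free maximal subgroup of exponent dividing four has a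
non-trivial abelian normal subgroup of odd order. -/
theorem exists_abelian_normal_of_isCoatom {G : Type*} [Group G] [Finite G] (H : Subgroup G)
    (hH : IsCoatom H) (hne : H ≠ ⊥) (hcore : H.normalCore = ⊥) (h4 : ∀ g ∈ H, g ^ 4 = 1) :
    ∃ E : Subgroup G, E.Normal ∧ E ≠ ⊥ ∧ (∀ a ∈ E, ∀ b ∈ E, a * b = b * a) ∧
      Odd (Nat.card E) := by
  induction hn : Nat.card G using Nat.strong_induction_on generalizing G with
  | _ n ih =>
  subst hn
  by_contra hcon
  obtain ⟨S, rfl⟩ := exists_sylow_eq hH hne hcore (isPGroup_two_of_pow_four h4)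
  have hno : ∀ M : Subgroup G, M.Normal → Odd (Nat.card M) → M = ⊥ := fun M hM hodd => by
    by_contra hM1
    exact hcon (exists_abelian_of_odd_normal hH h4 hM1 hodd)
  obtain ⟨z, hzS, hz1, hz2, hC, m, hm, hmz⟩ := exists_central_involution S hH hne hcore h4 hno
  have hconj : ∀ T : Sylow 2 G, ∃ g : G, ∀ x, x ∈ T ↔ g⁻¹ * x * g ∈ S := by
    intro T
    obtain ⟨g, rfl⟩ := MulAction.exists_smul_eq G S T
    refine ⟨g, fun x => ?_⟩
    change x ∈ MulAut.conj g • (S : Subgroup G) ↔ _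
    rw [Subgroup.mem_pointwise_smul_iff_inv_smul_mem, ← map_inv, MulAut.smul_def,
      MulAut.conj_apply, inv_inv]
    rfl
  have hmax : ∀ T : Sylow 2 G, IsCoatom (T : Subgroup G) := by
    intro T
    obtain ⟨g, rfl⟩ := MulAction.exists_smul_eq G S T
    exact (OrderIso.isCoatom_iff (MulAut.conj g).mapSubgroup _).2 hH
  have hcore' : ∀ P : Subgroup G, P.Normal → IsPGroup 2 P → P = ⊥ := by
    intro P hP hP2
    obtain ⟨g, hg⟩ := hP2.exists_conj_mem_sylow S
    refine Subgroup.eq_bot_of_normal_of_le hcore hP fun x hx => ?_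
    have := hg _ (hP.conj_mem x hx g⁻¹)
    rwa [show g * (g⁻¹ * x * g⁻¹⁻¹) * g⁻¹ = x by group] at this
  have h4' : ∀ T : Sylow 2 G, ∀ g ∈ T, g ^ 4 = 1 := by
    intro T x hx
    obtain ⟨g, hg⟩ := hconj T
    have := h4 _ ((hg x).1 hx)
    have h' : (g⁻¹ * x * g⁻¹⁻¹) ^ 4 = 1 := by rwa [inv_inv]
    rwa [conj_pow, mul_inv_eq_one, mul_eq_left] at h'
  have hz : ∀ T : Sylow 2 G, ∃ z, z * z = 1 ∧ ∀ x, x ∈ T ↔ x * z = z * x := by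
    intro T
    obtain ⟨g, hg⟩ := hconj T
    refine ⟨g * z * g⁻¹, ?_, fun x => ?_⟩
    · rw [show g * z * g⁻¹ * (g * z * g⁻¹) = g * (z * z) * g⁻¹ by group, hz2]
      group
    · rw [hg, hC, ← mul_right_inj g, ← mul_left_inj g⁻¹]
      exact Eq.congr (by group) (by group)
  have h8 : ∀ x : G, x ^ 8 = 1 → x ^ 4 = 1 := by
    intro x hx
    obtain ⟨T, hT⟩ := (isPGroup_zpowers (p := 2) (n := 3) (x := x) hx).exists_le_sylow
    exact h4' T x (hT (Subgroup.mem_zpowers x))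
  have hSn : ¬ (S : Subgroup G).Normal := fun h =>
    hne (Subgroup.eq_bot_of_normal_of_le hcore h le_rfl)
  have hlarge : ∃ D : Subgroup G, HasLargeNormalizer D := by
    have hne' : S ≠ m • S := by
      intro h
      have hmN : m ∈ Subgroup.normalizer (S : Set G) := Sylow.smul_eq_iff_mem_normalizer.1 h.symm
      rcases hH.le_iff.1 (Subgroup.le_normalizer (H := (S : Subgroup G))) with h' | h'
      · exact hSn (Subgroup.normalizer_eq_top_iff.1 h')
      · have hmS : m ∈ (S : Subgroup G) := h' ▸ hmN
        exact hmz (by rw [(hC m).1 hmS, mul_inv_cancel_right])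
    obtain ⟨D, hcD, hD2, hDN⟩ := Sylow.exists_normalizer_not_isPGroup hne' hm
      (Subgroup.smul_mem_pointwise_smul z (MulAut.conj m) _ hzS)
    refine ⟨D, hD2, ⟨_, hcD, ?_⟩, hDN⟩
    refine (m • S).2.to_le fun x hx => ?_
    obtain ⟨y, rfl⟩ : ∃ y, m * y * m⁻¹ = x := ⟨m⁻¹ * x * m, by group⟩
    refine Subgroup.smul_mem_pointwise_smul y (MulAut.conj m) _ ((hC y).2 ?_)
    have := Subgroup.mem_centralizer_singleton_iff.1 hx
    rw [← mul_right_inj m, ← mul_left_inj m⁻¹]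
    exact (Eq.congr (by group) (by group)).1 this
  obtain ⟨D, hD⟩ := hlarge
  refine not_hasLargeNormalizer hmax hcore' hz h4' h8 (fun X Q hX hQ hQn hQ4 => ?_) D hD
  refine ih _ ?_ (Q.map (QuotientGroup.mk' Q.normalCore)) (isCoatom_map_mk'_normalCore hQ) ?_
    (normalCore_map_mk'_normalCore Q) ?_ rfl
  · calc Nat.card (X ⧸ Q.normalCore) ≤ Nat.card X :=
        Nat.card_le_card_of_surjective _ (QuotientGroup.mk'_surjective Q.normalCore)
      _ < Nat.card G := lt_of_le_of_ne (Subgroup.card_le_card_group X) fun h =>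
        hX (Subgroup.eq_top_of_card_eq X h)
  · rw [Ne, Subgroup.map_eq_bot_iff, QuotientGroup.ker_mk']
    intro hle
    exact hQn (le_antisymm hle (Subgroup.normalCore_le Q) ▸ Subgroup.normalCore_normal Q)
  · rintro _ ⟨q, hq, rfl⟩
    rw [← map_pow, hQ4 q hq, map_one]

/-- A finite primitive permutation group of almost simple type (it has a
normal non-abelian simple subgroup with trivial centraliser, so that
`T ≤ G ≤ Aut T`) cannot have a point-stabiliser whose exponent divides 4. -/
theorem stmt11 {G Ω : Type*} [Group G] [Fintype G] [Fintype Ω] [MulAction G Ω]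
    [FaithfulSMul G Ω] (hprim : IsPrimitiveAction G Ω)
    (T : Subgroup G) (hTnorm : T.Normal) (hTsimple : IsSimpleGroup T)
    (hTnonab : ¬ ∀ s t : T, s * t = t * s)
    (hTcent : Subgroup.centralizer (T : Set G) = ⊥) (ω : Ω) :
    ¬ ∀ g ∈ stabilizer G ω, g ^ 4 = 1 := by
  intro h4
  have : IsPretransitive G Ω := hprim.1
  have : IsPreprimitive G Ω := { isTrivialBlock_of_isBlock := fun {B} hB => hprim.2 B hB }
  have : Nontrivial Ω := by
    by_contra hΩ
    rw [not_nontrivial_iff_subsingleton] at hΩ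
    refine hTnonab fun s t => Subtype.ext (eq_of_smul_eq_smul (α := Ω) fun a => ?_)
    exact Subsingleton.elim _ _
  have hmax : IsCoatom (stabilizer G ω) := IsPreprimitive.isCoatom_stabilizer_of_isPreprimitive G ω
  have hcore : (stabilizer G ω).normalCore = ⊥ := by
    rw [Subgroup.eq_bot_iff_forall]
    refine fun g hg => eq_of_smul_eq_smul (α := Ω) fun a => ?_
    obtain ⟨x, rfl⟩ := exists_smul_eq G ω a
    have h : (x⁻¹ * g * x⁻¹⁻¹) • ω = ω := hg x⁻¹
    rw [inv_inv, mul_smul, mul_smul, inv_smul_eq_iff] at h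
    rw [h, one_smul]
  by_cases hbot : stabilizer G ω = ⊥
  · refine hTnonab fun s t => ?_
    have hT1 : (s : G) ≠ 1 → Subgroup.zpowers (s : G) = ⊤ := fun hs =>
      hmax.2 _ (hbot ▸ bot_lt_iff_ne_bot.2 fun h => hs (Subgroup.zpowers_eq_bot.1 h))
    by_cases hs : (s : G) = 1
    · rw [show s = 1 from Subtype.ext hs, one_mul, mul_one]
    · obtain ⟨k, hk⟩ := Subgroup.mem_zpowers_iff.1 (hT1 hs ▸ Subgroup.mem_top (t : G))
      exact Subtype.ext (by
        change (s : G) * t = t * s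
        rw [← hk, (Commute.self_zpow (s : G) k).eq])
  · obtain ⟨E, hEn, hE1, hEab, -⟩ := exists_abelian_normal_of_isCoatom _ hmax hbot hcore h4
    rcases hTsimple.eq_bot_or_eq_top_of_normal (E.subgroupOf T) inferInstance with h | h
    · refine hE1 ?_
      rw [eq_bot_iff, ← hTcent]
      have hdisj := Subgroup.subgroupOf_eq_bot.1 h
      exact fun e he => Subgroup.mem_centralizer_iff.2 fun t ht =>
        (Subgroup.commute_of_normal_of_disjoint E T hEn hTnorm hdisj e t he ht).symm.eq
    · rw [Subgroup.subgroupOf_eq_top] at h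
      exact hTnonab fun s t => Subtype.ext (hEab s (h s.2) t (h t.2))
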